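/- Suppose Q(u) ≥ 0 for every u ∈ C_c^∞(Ω) and Q admits a ground state v. Then for every nonempty open set B with compact closure contained in Ω there exists a continuous function W : Ω → ℝ with W > 0 everywhere such that ∫_Ω W|u|^p dx ≤ Q(u) + ∫_B |u|^p dx for all u ∈ C_c^∞(Ω). -/

import Mathlib

open MeasureTheory Filter
open scoped RealInnerProductSpace Topology

noncomputable section

/-- Euclidean space `ℝ^d`. -/
abbrev Euc (d : ℕ) := EuclideanSpace ℝ (Fin d)

/-- A test function on `Ω`: smooth with compact support contained in `Ω`. -/
def IsTestFun {d : ℕ} (Ω : Set (Euc d)) (u : Euc d → ℝ) : Prop :=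
  ContDiff ℝ (⊤ : ℕ∞) u ∧ HasCompactSupport u ∧ tsupport u ⊆ Ω

/-- The energy functional `Q(u) = ∫_Ω (|∇u|^p + V |u|^p) dx`. -/
def energyQ {d : ℕ} (Ω : Set (Euc d)) (V : Euc d → ℝ) (p : ℝ) (u : Euc d → ℝ) : ℝ :=
  ∫ x in Ω, (‖gradient u x‖ ^ p + V x * |u x| ^ p)

/-- `V` is measurable and bounded on every compact subset of `Ω`. -/
def LocBddPotential {d : ℕ} (Ω : Set (Euc d)) (V : Euc d → ℝ) : Prop :=
  Measurable V ∧ ∀ K : Set (Euc d), K ⊆ Ω → IsCompact K → ∃ C : ℝ, ∀ x ∈ K, |V x| ≤ C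

/-- A positive supersolution of `Q'(u) = 0` in `Ω`. -/
def IsPositiveSupersolution {d : ℕ} (Ω : Set (Euc d)) (V : Euc d → ℝ) (p : ℝ)
    (v : Euc d → ℝ) : Prop :=
  ContDiffOn ℝ 1 v Ω ∧ (∀ x ∈ Ω, 0 < v x) ∧
    ∀ φ : Euc d → ℝ, IsTestFun Ω φ → (∀ x, 0 ≤ φ x) →
      0 ≤ ∫ x in Ω, (‖gradient v x‖ ^ (p - 2) * ⟪gradient v x, gradient φ x⟫
            + V x * v x ^ (p - 1) * φ x)

/-- A positive (weak) solution of `Q'(u) = 0` in `Ω`. -/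
def IsPositiveSolution {d : ℕ} (Ω : Set (Euc d)) (V : Euc d → ℝ) (p : ℝ)
    (v : Euc d → ℝ) : Prop :=
  ContDiffOn ℝ 1 v Ω ∧ (∀ x ∈ Ω, 0 < v x) ∧
    ∀ φ : Euc d → ℝ, IsTestFun Ω φ →
      (∫ x in Ω, (‖gradient v x‖ ^ (p - 2) * ⟪gradient v x, gradient φ x⟫
            + V x * v x ^ (p - 1) * φ x)) = 0

/-- A null sequence for the functional `Q`. -/
def IsNullSequence {d : ℕ} (Ω : Set (Euc d)) (V : Euc d → ℝ) (p : ℝ)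
    (u : ℕ → Euc d → ℝ) : Prop :=
  (∀ k, IsTestFun Ω (u k)) ∧ (∀ k x, 0 ≤ u k x) ∧
    ∃ B : Set (Euc d), IsOpen B ∧ IsCompact (closure B) ∧ closure B ⊆ Ω ∧
      (∀ k, (∫ x in B, u k x ^ p) = 1) ∧
      Tendsto (fun k => energyQ Ω V p (u k)) atTop (𝓝 0)

/-- A ground state of `Q`: a positive `C¹` function on `Ω` which is the limit in
`L^p_loc(Ω)` of a null sequence. -/
def IsGroundState {d : ℕ} (Ω : Set (Euc d)) (V : Euc d → ℝ) (p : ℝ)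
    (v : Euc d → ℝ) : Prop :=
  ContDiffOn ℝ 1 v Ω ∧ (∀ x ∈ Ω, 0 < v x) ∧
    ∃ u : ℕ → Euc d → ℝ, IsNullSequence Ω V p u ∧
      ∀ K : Set (Euc d), K ⊆ Ω → IsCompact K →
        Tendsto (fun k => ∫ x in K, |u k x - v x| ^ p) atTop (𝓝 0)

/-- `Q` has a weighted spectral gap (is strictly positive) in `Ω`. -/
def HasSpectralGap {d : ℕ} (Ω : Set (Euc d)) (V : Euc d → ℝ) (p : ℝ) : Prop :=
  ∃ W : Euc d → ℝ, ContinuousOn W Ω ∧ (∀ x ∈ Ω, 0 < W x) ∧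
    ∀ u : Euc d → ℝ, IsTestFun Ω u → (∫ x in Ω, W x * |u x| ^ p) ≤ energyQ Ω V p u

/-- `c_B`: the infimum of `Q(u)` over test functions with `∫_B |u|^p = 1`. -/
def cB {d : ℕ} (Ω B : Set (Euc d)) (V : Euc d → ℝ) (p : ℝ) : ℝ :=
  sInf { q : ℝ | ∃ u : Euc d → ℝ, IsTestFun Ω u ∧ (∫ x in B, |u x| ^ p) = 1 ∧
    q = energyQ Ω V p u }

/-- The Picone Lagrangian `L(u,v)`. -/
def piconeL {d : ℕ} (p : ℝ) (u v : Euc d → ℝ) (x : Euc d) : ℝ :=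
  ‖gradient u x‖ ^ p + (p - 1) * (u x / v x) ^ p * ‖gradient v x‖ ^ p
    - p * (u x / v x) ^ (p - 1) *
        (‖gradient v x‖ ^ (p - 2) * ⟪gradient u x, gradient v x⟫)

/-!
For nonnegative `a` and `b` put `m = (a ^ p + b ^ p) ^ (1 / p)`. The potential term of `Q` is
additive, `V m ^ p = V a ^ p + V b ^ p`, so `0 ≤ Q(m) ≤ Q(a) + Q(b) - D`, where uniform convexity of
`‖·‖ ^ p` makes the deficit `D` control
`∫ a ^ p b ^ p / (a ^ p + b ^ p) |∇ log a - ∇ log b| ^ p`, up to a small multiple of `∫ |∇a| ^ p`.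
Take `a = |u|` (regularized) and `b = s w_k` with `w_k` a null sequence. Since `Q(w_k) → 0`, the
deficit is bounded by `Q(u)` as `k → ∞`, and the bound passes to finite differences of
`s |u| / (s v + |u|)`. Letting `s → ∞` and the step of the differences tend to `0` yields, on
compact sets, `∫ |∇(u / v)| ^ p ≤ C Q(u) + ε ∫ |u / v| ^ p` with `ε` as small as desired.

A Poincaré inequality along rays, in which the mass of the larger ball is controlled by the gradient
and the mass of a small concentric ball, absorbs the `ε` term. Hence control of the `L^p` mass of
`u` near one point by `Q(u) + ∫_B |u| ^ p` spreads to all nearby points, and by connectedness to all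
of `Ω`. The weight is a countable sum of bumps with rapidly decreasing coefficients.
-/

section ConvexityGap

variable {E : Type*} [NormedAddCommGroup E] [NormedSpace ℝ E] {p : ℝ}

theorem convexOn_norm_rpow (hp : 1 ≤ p) : ConvexOn ℝ Set.univ (fun X : E ↦ ‖X‖ ^ p) := by
  refine ⟨convex_univ, fun X _ Y _ l m hl hm hlm ↦ ?_⟩
  calc ‖l • X + m • Y‖ ^ p ≤ (l • ‖X‖ + m • ‖Y‖) ^ p := by
        gcongr
        exact convexOn_univ_norm.2 trivial trivial hl hm hlm
    _ ≤ l • ‖X‖ ^ p + m • ‖Y‖ ^ p :=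
        (convexOn_rpow hp).2 (norm_nonneg X) (norm_nonneg Y) hl hm hlm

/-- The defect of the convexity inequality for `‖·‖ ^ p` at the midpoint of `X` and `Y`. -/
def midpointGap (p : ℝ) (X Y : E) : ℝ :=
  (‖X‖ ^ p + ‖Y‖ ^ p) / 2 - ‖midpoint ℝ X Y‖ ^ p

theorem midpoint_eq_half_smul_add (X Y : E) :
    midpoint ℝ X Y = (1 / 2 : ℝ) • X + (1 / 2 : ℝ) • Y := by
  rw [midpoint_eq_smul_add, smul_add, invOf_eq_inv, one_div]

theorem midpointGap_comm (X Y : E) : midpointGap p X Y = midpointGap p Y X := by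
  rw [midpointGap, midpointGap, midpoint_comm, add_comm]

theorem midpointGap_nonneg (hp : 1 ≤ p) (X Y : E) : 0 ≤ midpointGap p X Y := by
  have h := (convexOn_norm_rpow hp).2 (Set.mem_univ X) (Set.mem_univ Y)
    one_half_pos.le one_half_pos.le (add_halves (1 : ℝ))
  rw [← midpoint_eq_half_smul_add, smul_eq_mul, smul_eq_mul] at h
  rw [midpointGap]
  linarith

theorem midpointGap_pos [StrictConvexSpace ℝ E] (hp : 1 < p) {X Y : E} (h : X ≠ Y) :
    0 < midpointGap p X Y := by
  have hp₀ : 0 < p := by linarith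
  rw [midpointGap, sub_pos, midpoint_eq_half_smul_add]
  by_cases hXY : ‖X‖ = ‖Y‖
  · have hlt := norm_combo_lt_of_ne le_rfl hXY.ge h one_half_pos one_half_pos (add_halves (1 : ℝ))
    rw [← hXY, add_self_div_two]
    exact Real.rpow_lt_rpow (norm_nonneg _) hlt hp₀
  · calc ‖(1 / 2 : ℝ) • X + (1 / 2 : ℝ) • Y‖ ^ p
        ≤ ((1 / 2 : ℝ) • ‖X‖ + (1 / 2 : ℝ) • ‖Y‖) ^ p := by
          gcongr
          exact convexOn_univ_norm.2 trivial trivial one_half_pos.le one_half_pos.le (add_halves 1)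
      _ < (1 / 2 : ℝ) • ‖X‖ ^ p + (1 / 2 : ℝ) • ‖Y‖ ^ p :=
          (strictConvexOn_rpow hp).2 (norm_nonneg X) (norm_nonneg Y) hXY
            one_half_pos one_half_pos (add_halves 1)
      _ = (‖X‖ ^ p + ‖Y‖ ^ p) / 2 := by simp only [smul_eq_mul]; ring

theorem norm_smul_rpow {c : ℝ} (hc : 0 ≤ c) (X : E) : ‖c • X‖ ^ p = c ^ p * ‖X‖ ^ p := by
  rw [norm_smul, Real.norm_of_nonneg hc, Real.mul_rpow hc (norm_nonneg X)]

theorem midpointGap_smul {c : ℝ} (hc : 0 ≤ c) (X Y : E) :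
    midpointGap p (c • X) (c • Y) = c ^ p * midpointGap p X Y := by
  have hmid : midpoint ℝ (c • X) (c • Y) = c • midpoint ℝ X Y := by
    simp only [midpoint_eq_half_smul_add]
    module
  rw [midpointGap, midpointGap, hmid, norm_smul_rpow hc, norm_smul_rpow hc, norm_smul_rpow hc]
  ring

theorem continuous_midpointGap (hp : 0 ≤ p) :
    Continuous fun q : E × E ↦ midpointGap p q.1 q.2 := by
  have hrpow : Continuous fun X : E ↦ ‖X‖ ^ p := continuous_norm.rpow_const fun _ ↦ Or.inr hp
  have hmid : Continuous fun q : E × E ↦ midpoint ℝ q.1 q.2 := by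
    simp only [midpoint_eq_half_smul_add]
    fun_prop
  exact (((hrpow.comp continuous_fst).add (hrpow.comp continuous_snd)).div_const 2).sub
    (hrpow.comp hmid)

theorem exists_pos_le_midpointGap_of_le_norm_sub [StrictConvexSpace ℝ E] [ProperSpace E]
    (hp : 1 < p) {c : ℝ} (hc : 0 < c) :
    ∃ δ > 0, ∀ X Y : E, ‖X‖ ≤ 1 → ‖Y‖ ≤ 1 → c ≤ ‖X - Y‖ → δ ≤ midpointGap p X Y := by
  let S : Set (E × E) :=
    (Metric.closedBall 0 1 ×ˢ Metric.closedBall 0 1) ∩ {q | c ≤ ‖q.1 - q.2‖}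
  have hS : IsCompact S :=
    ((isCompact_closedBall _ _).prod (isCompact_closedBall _ _)).inter_right
      (isClosed_le continuous_const (by fun_prop))
  have hmem : ∀ X Y : E, ‖X‖ ≤ 1 → ‖Y‖ ≤ 1 → c ≤ ‖X - Y‖ → (X, Y) ∈ S := fun X Y hX hY h ↦
    ⟨⟨mem_closedBall_zero_iff.2 hX, mem_closedBall_zero_iff.2 hY⟩, h⟩
  rcases S.eq_empty_or_nonempty with hempty | hne
  · exact ⟨1, one_pos, fun X Y hX hY h ↦ by simpa [hempty] using hmem X Y hX hY h⟩
  obtain ⟨q, hq, hmin⟩ :=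
    hS.exists_isMinOn hne (continuous_midpointGap (zero_le_one.trans hp.le)).continuousOn
  have hq' : q.1 ≠ q.2 := fun h ↦ (hc.trans_le hq.2).ne' (by rw [h, sub_self, norm_zero])
  exact ⟨_, midpointGap_pos hp hq', fun X Y hX hY h ↦ hmin (hmem X Y hX hY h)⟩

/-- `‖X - Y‖ ^ p` is controlled by `C` times the midpoint gap, up to the error `κ * ‖X‖ ^ p`.
For `p < 2` no such inequality can hold with `κ = 0`. -/
def IsGapBound (E : Type*) [NormedAddCommGroup E] [NormedSpace ℝ E] (p κ C : ℝ) : Prop :=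
  ∀ X Y : E, ‖X - Y‖ ^ p ≤ C * midpointGap p X Y + κ * ‖X‖ ^ p

theorem exists_norm_sub_rpow_le_mul_midpointGap [StrictConvexSpace ℝ E] [ProperSpace E]
    (hp : 1 < p) {c : ℝ} (hc : 0 < c) :
    ∃ C > 0, ∀ X Y : E, c * max ‖X‖ ‖Y‖ ≤ ‖X - Y‖ → ‖X - Y‖ ^ p ≤ C * midpointGap p X Y := by
  obtain ⟨δ, hδ, hgap⟩ := exists_pos_le_midpointGap_of_le_norm_sub (E := E) hp hc
  have hp₀ : 0 < p := by linarith
  refine ⟨2 ^ p / δ, by positivity, fun X Y hXY ↦ ?_⟩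
  set R := max ‖X‖ ‖Y‖
  have hX : ‖X‖ ≤ R := le_max_left _ _
  have hY : ‖Y‖ ≤ R := le_max_right _ _
  have hsub : ‖X - Y‖ ≤ 2 * R := (norm_sub_le X Y).trans (by linarith)
  rcases ((norm_nonneg X).trans hX).eq_or_lt with hR | hR
  · have hzero : ‖X - Y‖ = 0 := le_antisymm (by linarith) (norm_nonneg _)
    rw [hzero, Real.zero_rpow hp₀.ne']
    exact mul_nonneg (by positivity) (midpointGap_nonneg hp.le X Y)
  · have hscale : ∀ Z : E, ‖R⁻¹ • Z‖ = R⁻¹ * ‖Z‖ := fun Z ↦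
      norm_smul_of_nonneg (inv_nonneg.2 hR.le) Z
    have hδ' := hgap (R⁻¹ • X) (R⁻¹ • Y) (by rwa [hscale, inv_mul_le_one₀ hR])
      (by rwa [hscale, inv_mul_le_one₀ hR])
      (by rwa [← smul_sub, hscale, le_inv_mul_iff₀ hR, mul_comm])
    rw [midpointGap_smul (inv_nonneg.2 hR.le), Real.inv_rpow hR.le,
      le_inv_mul_iff₀ (by positivity)] at hδ'
    calc ‖X - Y‖ ^ p ≤ (2 * R) ^ p := by gcongr
      _ = 2 ^ p / δ * (R ^ p * δ) := by
          rw [Real.mul_rpow two_pos.le hR.le]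
          field_simp
      _ ≤ 2 ^ p / δ * midpointGap p X Y := by gcongr

theorem norm_sub_rpow_le_of_lt_mul_max {F : Type*} [NormedAddCommGroup F] (hp : 0 ≤ p) {c : ℝ}
    (hc : 0 ≤ c) (hc' : c ≤ 1 / 2) {X Y : F} (h : ‖X - Y‖ < c * max ‖X‖ ‖Y‖) :
    ‖X - Y‖ ^ p ≤ (2 * c) ^ p * ‖X‖ ^ p := by
  set R := max ‖X‖ ‖Y‖
  have hRX : R ≤ ‖X‖ + ‖X - Y‖ :=
    max_le (le_add_of_nonneg_right (norm_nonneg _)) (norm_le_norm_add_norm_sub X Y)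
  have hRX' : R ≤ 2 * ‖X‖ := by nlinarith [le_max_left ‖X‖ ‖Y‖, norm_nonneg X]
  rw [← Real.mul_rpow (by positivity) (norm_nonneg _)]
  gcongr
  nlinarith

theorem exists_isGapBound [StrictConvexSpace ℝ E] [ProperSpace E] (hp : 1 < p) {κ : ℝ}
    (hκ : 0 < κ) : ∃ C > 0, IsGapBound E p κ C := by
  have hp₀ : 0 < p := by linarith
  set c := min (1 / 2) (κ ^ p⁻¹ / 2)
  have hc : 0 < c := by positivity
  have hcκ : (2 * c) ^ p ≤ κ := calc
    (2 * c) ^ p ≤ (κ ^ p⁻¹) ^ p := by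
      gcongr
      linarith [min_le_right (1 / 2) (κ ^ p⁻¹ / 2)]
    _ = κ := Real.rpow_inv_rpow hκ.le hp₀.ne'
  obtain ⟨C, hC, hfar⟩ := exists_norm_sub_rpow_le_mul_midpointGap (E := E) hp hc
  refine ⟨C, hC, fun X Y ↦ ?_⟩
  have hgap := midpointGap_nonneg hp.le X Y
  rcases le_or_gt (c * max ‖X‖ ‖Y‖) ‖X - Y‖ with h | h
  · exact (hfar X Y h).trans (le_add_of_nonneg_right (by positivity))
  · calc ‖X - Y‖ ^ p ≤ (2 * c) ^ p * ‖X‖ ^ p :=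
          norm_sub_rpow_le_of_lt_mul_max hp₀.le hc.le (min_le_left _ _) h
      _ ≤ κ * ‖X‖ ^ p := by gcongr
      _ ≤ C * midpointGap p X Y + κ * ‖X‖ ^ p := le_add_of_nonneg_left (by positivity)

theorem two_mul_midpointGap_le_of_le (hp : 1 ≤ p) (X Y : E) {l m : ℝ} (hl : 0 ≤ l)
    (hlm : l + m = 1) (hle : l ≤ m) :
    2 * (l * m) * midpointGap p X Y ≤ l * ‖X‖ ^ p + m * ‖Y‖ ^ p - ‖l • X + m • Y‖ ^ p := by
  obtain rfl : m = 1 - l := by linarith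
  have hconv : ‖l • X + (1 - l) • Y‖ ^ p ≤
      2 * l * ‖midpoint ℝ X Y‖ ^ p + (1 - 2 * l) * ‖Y‖ ^ p := by
    have h := (convexOn_norm_rpow hp).2 (Set.mem_univ (midpoint ℝ X Y)) (Set.mem_univ Y)
      (show 0 ≤ 2 * l by linarith) (show 0 ≤ 1 - 2 * l by linarith) (by ring)
    have hcomb : (2 * l) • midpoint ℝ X Y + (1 - 2 * l) • Y = l • X + (1 - l) • Y := by
      rw [midpoint_eq_half_smul_add]
      module
    rwa [hcomb, smul_eq_mul, smul_eq_mul] at h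
  calc 2 * (l * (1 - l)) * midpointGap p X Y ≤ 2 * l * midpointGap p X Y :=
        mul_le_mul_of_nonneg_right (by nlinarith) (midpointGap_nonneg hp X Y)
    _ ≤ l * ‖X‖ ^ p + (1 - l) * ‖Y‖ ^ p - ‖l • X + (1 - l) • Y‖ ^ p := by
        rw [midpointGap]
        linarith

theorem two_mul_midpointGap_le (hp : 1 ≤ p) (X Y : E) {l m : ℝ} (hl : 0 ≤ l) (hm : 0 ≤ m)
    (hlm : l + m = 1) :
    2 * (l * m) * midpointGap p X Y ≤ l * ‖X‖ ^ p + m * ‖Y‖ ^ p - ‖l • X + m • Y‖ ^ p := by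
  rcases le_total l m with h | h
  · exact two_mul_midpointGap_le_of_le hp X Y hl hlm h
  · have hswap := two_mul_midpointGap_le_of_le hp Y X hm (by linarith) h
    rw [midpointGap_comm, mul_comm m l, add_comm (m • Y)] at hswap
    linarith

/-- The defect of the convexity inequality for `‖·‖ ^ p` at the points `X`, `Y` with weights
proportional to `A`, `B`, multiplied by the total weight `A + B`. -/
def convexityDeficit (p A B : ℝ) (X Y : E) : ℝ :=
  A * ‖X‖ ^ p + B * ‖Y‖ ^ p - (A + B) * ‖(A / (A + B)) • X + (B / (A + B)) • Y‖ ^ p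

theorem two_mul_midpointGap_le_convexityDeficit (hp : 1 ≤ p) {A B : ℝ} (hA : 0 < A) (hB : 0 < B)
    (X Y : E) : 2 * (A * B / (A + B)) * midpointGap p X Y ≤ convexityDeficit p A B X Y := by
  have h := mul_le_mul_of_nonneg_left
    (two_mul_midpointGap_le hp X Y (show 0 ≤ A / (A + B) by positivity)
      (show 0 ≤ B / (A + B) by positivity) (by field_simp)) (show 0 ≤ A + B by positivity)
  calc 2 * (A * B / (A + B)) * midpointGap p X Y
      = (A + B) * (2 * (A / (A + B) * (B / (A + B))) * midpointGap p X Y) := by field_simp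
    _ ≤ _ := h
    _ = convexityDeficit p A B X Y := by
        rw [convexityDeficit]
        field_simp

theorem convexityDeficit_nonneg (hp : 1 ≤ p) {A B : ℝ} (hA : 0 < A) (hB : 0 < B) (X Y : E) :
    0 ≤ convexityDeficit p A B X Y := by
  have hgap := midpointGap_nonneg hp X Y
  exact le_trans (by positivity) (two_mul_midpointGap_le_convexityDeficit hp hA hB X Y)

theorem IsGapBound.mul_norm_sub_rpow_le {κ C : ℝ} (h : IsGapBound E p κ C) (hp : 1 ≤ p)
    (hC : 0 ≤ C) (hκ : 0 ≤ κ) {A B : ℝ} (hA : 0 < A) (hB : 0 < B) (X Y : E) :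
    A * B / (A + B) * ‖X - Y‖ ^ p ≤ C * convexityDeficit p A B X Y + κ * (A * ‖X‖ ^ p) := by
  have hdef := two_mul_midpointGap_le_convexityDeficit hp hA hB X Y
  have hle : A * B / (A + B) ≤ A := by
    rw [div_le_iff₀ (by positivity)]
    nlinarith
  have hgap : A * B / (A + B) * midpointGap p X Y ≤ convexityDeficit p A B X Y := by
    have := mul_nonneg (show 0 ≤ A * B / (A + B) by positivity) (midpointGap_nonneg hp X Y)
    linarith
  calc A * B / (A + B) * ‖X - Y‖ ^ p
      ≤ A * B / (A + B) * (C * midpointGap p X Y + κ * ‖X‖ ^ p) := by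
        gcongr
        exact h X Y
    _ = C * (A * B / (A + B) * midpointGap p X Y) + κ * (A * B / (A + B) * ‖X‖ ^ p) := by ring
    _ ≤ C * convexityDeficit p A B X Y + κ * (A * ‖X‖ ^ p) := by gcongr

end ConvexityGap

section Gradient

variable {F : Type*} [NormedAddCommGroup F] [InnerProductSpace ℝ F] [CompleteSpace F]
  {f g : F → ℝ} {x : F}

theorem norm_gradient (f : F → ℝ) (x : F) : ‖gradient f x‖ = ‖fderiv ℝ f x‖ :=
  LinearIsometryEquiv.norm_map _ _

theorem continuous_gradient (hf : ContDiff ℝ 1 f) : Continuous (gradient f) :=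
  (LinearIsometryEquiv.continuous _).comp (hf.continuous_fderiv one_ne_zero)

theorem tsupport_gradient_subset (f : F → ℝ) : tsupport (gradient f) ⊆ tsupport f := by
  refine closure_minimal (fun x hx ↦ ?_) isClosed_closure
  contrapose! hx
  rw [Function.notMem_support, (notMem_tsupport_iff_eventuallyEq.1 hx).gradient_eq]
  exact gradient_fun_const x 0

theorem gradient_const_mul (c : ℝ) (hf : DifferentiableAt ℝ f x) :
    gradient (fun y ↦ c * f y) x = c • gradient f x := by
  rw [gradient, fderiv_const_mul hf, map_smulₛₗ, conj_trivial, gradient]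

theorem norm_gradient_sqrt_sq_add_sq_le (hf : DifferentiableAt ℝ f x) (hg : DifferentiableAt ℝ g x)
    (h0 : f x ^ 2 + g x ^ 2 ≠ 0) :
    ‖gradient (fun y ↦ √(f y ^ 2 + g y ^ 2)) x‖ ≤ ‖gradient f x‖ + ‖gradient g x‖ := by
  set r := √(f x ^ 2 + g x ^ 2)
  have hr : 0 < r := Real.sqrt_pos.2 (lt_of_le_of_ne (by positivity) h0.symm)
  have hd : HasFDerivAt (fun y ↦ √(f y ^ 2 + g y ^ 2))
      ((f x / r) • fderiv ℝ f x + (g x / r) • fderiv ℝ g x) x := by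
    convert ((hf.hasFDerivAt.pow 2).fun_add (hg.hasFDerivAt.pow 2)).sqrt h0 using 1
    ext y
    simp only [add_apply, smul_apply, smul_eq_mul, r]
    field_simp
    ring
  have hle : ∀ t : ℝ, |t| ≤ r → ‖t / r‖ ≤ 1 := fun t ht ↦ by
    rwa [norm_div, Real.norm_eq_abs, Real.norm_of_nonneg hr.le, div_le_one hr]
  have hfr : |f x| ≤ r := Real.abs_le_sqrt (le_add_of_nonneg_right (sq_nonneg _))
  have hgr : |g x| ≤ r := Real.abs_le_sqrt (le_add_of_nonneg_left (sq_nonneg _))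
  rw [norm_gradient, norm_gradient, norm_gradient, hd.fderiv]
  calc ‖(f x / r) • fderiv ℝ f x + (g x / r) • fderiv ℝ g x‖
      ≤ ‖f x / r‖ * ‖fderiv ℝ f x‖ + ‖g x / r‖ * ‖fderiv ℝ g x‖ := by
        rw [← norm_smul, ← norm_smul]
        exact norm_add_le _ _
    _ ≤ ‖fderiv ℝ f x‖ + ‖fderiv ℝ g x‖ :=
        add_le_add (mul_le_of_le_one_left (norm_nonneg _) (hle _ hfr))
          (mul_le_of_le_one_left (norm_nonneg _) (hle _ hgr))

end Gradient

section TestFunctions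

variable {d : ℕ} {Ω : Set (Euc d)} {φ u a : Euc d → ℝ} {ε : ℝ}

theorem IsTestFun.differentiableAt (hu : IsTestFun Ω u) (x : Euc d) : DifferentiableAt ℝ u x :=
  hu.1.differentiable (by simp) x

theorem IsTestFun.continuous_gradient (hu : IsTestFun Ω u) : Continuous (gradient u) :=
  _root_.continuous_gradient (hu.1.of_le (by simp))

theorem IsTestFun.hasCompactSupport_gradient (hu : IsTestFun Ω u) :
    HasCompactSupport (gradient u) :=
  hu.2.1.of_isClosed_subset isClosed_closure (tsupport_gradient_subset u)

theorem IsTestFun.of_support_subset (hφ : IsTestFun Ω φ) (ha : ContDiff ℝ (⊤ : ℕ∞) a)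
    (h : Function.support a ⊆ Function.support φ) : IsTestFun Ω a :=
  have hsub : tsupport a ⊆ tsupport φ := closure_mono h
  ⟨ha, hφ.2.1.of_isClosed_subset isClosed_closure hsub, hsub.trans hφ.2.2⟩

theorem exists_isTestFun_eq_one {L : Set (Euc d)} (hΩ : IsOpen Ω) (hL : IsCompact L)
    (hLΩ : L ⊆ Ω) :
    ∃ φ, IsTestFun Ω φ ∧ (∀ x, φ x ∈ Set.Icc (0 : ℝ) 1) ∧ ∀ᶠ x in 𝓝ˢ L, φ x = 1 := by
  obtain ⟨L', hL', hLL', hL'Ω⟩ := exists_compact_between hL hΩ hLΩ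
  obtain ⟨φ, hone, hzero, hφ⟩ := exists_contMDiffMap_one_nhds_of_subset_interior
    (n := (⊤ : ℕ∞)) (modelWithCornersSelf ℝ (Euc d)) hL.isClosed hLL'
  have hsupp : tsupport φ ⊆ L' :=
    closure_minimal (Function.support_subset_iff'.2 hzero) hL'.isClosed
  exact ⟨φ, ⟨φ.contMDiff.contDiff, hL'.of_isClosed_subset isClosed_closure hsupp,
    hsupp.trans hL'Ω⟩, hφ, hone⟩

/-- The class of smooth nonnegative functions attached to a cutoff function `φ ≥ 0`: positive where
`φ` is, and a multiple of `φ` near each zero of `φ`. It contains smooth approximations of `|u|`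
for test functions `u`, and is stable under `(a, b) ↦ (a ^ p + b ^ p) ^ (1 / p)`. -/
structure IsAdapted (φ a : Euc d → ℝ) : Prop where
  contDiff : ContDiff ℝ (⊤ : ℕ∞) a
  pos : ∀ x, φ x ≠ 0 → 0 < a x
  eventuallyEq : ∀ x, φ x = 0 → ∃ c ≥ 0, ∀ᶠ y in 𝓝 x, a y = c * φ y

theorem IsAdapted.eq_zero (h : IsAdapted φ a) {x : Euc d} (hx : φ x = 0) : a x = 0 := by
  obtain ⟨c, -, hc⟩ := h.eventuallyEq x hx
  rw [hc.self_of_nhds, hx, mul_zero]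

theorem IsAdapted.nonneg (h : IsAdapted φ a) (x : Euc d) : 0 ≤ a x := by
  by_cases hx : φ x = 0
  · exact (h.eq_zero hx).ge
  · exact (h.pos x hx).le

theorem IsAdapted.isTestFun (h : IsAdapted φ a) (hφ : IsTestFun Ω φ) : IsTestFun Ω a :=
  hφ.of_support_subset h.contDiff fun _ hx hφx ↦ hx (h.eq_zero hφx)

/-- Regularization of `|u|`; it is smooth when `ε > 0` and `tsupport u ⊆ Function.support φ`. -/
def regAbs (ε : ℝ) (φ u : Euc d → ℝ) (x : Euc d) : ℝ := √(u x ^ 2 + (ε * φ x) ^ 2)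

theorem abs_le_regAbs (x : Euc d) : |u x| ≤ regAbs ε φ u x :=
  Real.abs_le_sqrt (le_add_of_nonneg_right (sq_nonneg _))

theorem regAbs_le (hε : 0 ≤ ε) (hφ : ∀ x, 0 ≤ φ x) (x : Euc d) :
    regAbs ε φ u x ≤ |u x| + ε * φ x := by
  have hφx := mul_nonneg hε (hφ x)
  rw [regAbs, Real.sqrt_le_left (by positivity), add_sq, sq_abs]
  nlinarith [mul_nonneg (abs_nonneg (u x)) hφx]

theorem regAbs_eventuallyEq (hε : 0 ≤ ε) (hφ : ∀ x, 0 ≤ φ x)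
    (hu : tsupport u ⊆ Function.support φ) {x : Euc d} (hx : φ x = 0) :
    regAbs ε φ u =ᶠ[𝓝 x] fun y ↦ ε * φ y := by
  filter_upwards [notMem_tsupport_iff_eventuallyEq.1 fun h ↦ hu h hx] with y hy
  rw [regAbs, hy, Pi.zero_apply, zero_pow two_ne_zero, zero_add,
    Real.sqrt_sq (mul_nonneg hε (hφ y))]

theorem isAdapted_regAbs (hε : 0 < ε) (hφ : ∀ x, 0 ≤ φ x) (hφs : ContDiff ℝ (⊤ : ℕ∞) φ)
    (hus : ContDiff ℝ (⊤ : ℕ∞) u) (hu : tsupport u ⊆ Function.support φ) :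
    IsAdapted φ (regAbs ε φ u) where
  contDiff := contDiff_iff_contDiffAt.2 fun x ↦ by
    by_cases hx : φ x = 0
    · exact (contDiff_const.mul hφs).contDiffAt.congr_of_eventuallyEq
        (regAbs_eventuallyEq hε.le hφ hu hx)
    · exact ((hus.pow 2).add ((contDiff_const.mul hφs).pow 2)).contDiffAt.sqrt (by positivity)
  pos x hx := Real.sqrt_pos.2 (by positivity)
  eventuallyEq _ hx := ⟨ε, hε.le, regAbs_eventuallyEq hε.le hφ hu hx⟩

theorem norm_gradient_regAbs_le (hε : 0 < ε) (hφ : ∀ x, 0 ≤ φ x) (hφs : Differentiable ℝ φ)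
    (hus : Differentiable ℝ u) (hu : tsupport u ⊆ Function.support φ) (x : Euc d) :
    ‖gradient (regAbs ε φ u) x‖ ≤ ‖gradient u x‖ + ε * ‖gradient φ x‖ := by
  rw [← norm_smul_of_nonneg hε.le, ← gradient_const_mul ε (hφs x)]
  by_cases hx : φ x = 0
  · rw [(regAbs_eventuallyEq hε.le hφ hu hx).gradient_eq]
    exact le_add_of_nonneg_left (norm_nonneg _)
  · exact norm_gradient_sqrt_sq_add_sq_le (hus x) ((hφs x).const_mul ε) (by positivity)

end TestFunctions

section Energy

variable {d : ℕ} {Ω : Set (Euc d)} {V φ u : Euc d → ℝ} {p : ℝ}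

theorem integrable_rpow_of_hasCompactSupport {X : Type*} [TopologicalSpace X] [MeasurableSpace X]
    [OpensMeasurableSpace X] {μ : Measure X} [IsFiniteMeasureOnCompacts μ] {f : X → ℝ}
    (hp : 0 < p) (hf : Continuous f) (hc : HasCompactSupport f) :
    Integrable (fun x ↦ f x ^ p) μ :=
  (hf.rpow_const fun _ ↦ Or.inr hp.le).integrable_of_hasCompactSupport
    (hc.comp_left (g := fun t : ℝ ↦ t ^ p) (Real.zero_rpow hp.ne'))

theorem LocBddPotential.integrableOn {K : Set (Euc d)} (hV : LocBddPotential Ω V) (hK : IsCompact K)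
    (hKΩ : K ⊆ Ω) : IntegrableOn V K := by
  obtain ⟨C, hC⟩ := hV.2 K hKΩ hK
  exact Measure.integrableOn_of_bounded hK.measure_lt_top.ne hV.1.aestronglyMeasurable
    (ae_restrict_of_forall_mem hK.measurableSet hC)

theorem IsTestFun.integrable_gradient_rpow (hp : 0 < p) (hu : IsTestFun Ω u) :
    Integrable fun x ↦ ‖gradient u x‖ ^ p :=
  integrable_rpow_of_hasCompactSupport hp hu.continuous_gradient.norm
    hu.hasCompactSupport_gradient.norm

theorem IsTestFun.integrable_potential_mul (hp : 0 < p) (hV : LocBddPotential Ω V)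
    (hu : IsTestFun Ω u) : Integrable fun x ↦ V x * |u x| ^ p := by
  have hsupp : Function.support (fun x ↦ V x * |u x| ^ p) ⊆ tsupport u := fun x hx ↦
    subset_closure fun h ↦ hx (by simp only [h, abs_zero, Real.zero_rpow hp.ne', mul_zero])
  refine (integrableOn_iff_integrable_of_support_subset hsupp).1 ?_
  exact (hV.integrableOn hu.2.1 hu.2.2).mul_continuousOn
    (hu.1.continuous.abs.rpow_const fun _ ↦ Or.inr hp.le).continuousOn hu.2.1

theorem IsTestFun.integrable_energy (hp : 0 < p) (hV : LocBddPotential Ω V) (hu : IsTestFun Ω u) :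
    Integrable fun x ↦ ‖gradient u x‖ ^ p + V x * |u x| ^ p :=
  (hu.integrable_gradient_rpow hp).add (hu.integrable_potential_mul hp hV)

theorem IsTestFun.const_mul (c : ℝ) (hu : IsTestFun Ω u) : IsTestFun Ω fun x ↦ c * u x :=
  hu.of_support_subset (contDiff_const.mul hu.1) fun _ hx h ↦
    hx (mul_eq_zero_of_right c h)

theorem IsTestFun.energyQ_const_mul {c : ℝ} (hc : 0 ≤ c) (hu : IsTestFun Ω u) :
    energyQ Ω V p (fun x ↦ c * u x) = c ^ p * energyQ Ω V p u := by
  rw [energyQ, energyQ, ← integral_const_mul]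
  refine integral_congr_ae (Eventually.of_forall fun x ↦ ?_)
  dsimp only
  rw [gradient_const_mul c (hu.differentiableAt x), norm_smul_rpow hc, abs_mul, abs_of_nonneg hc,
    Real.mul_rpow hc (abs_nonneg _)]
  ring

theorem tendsto_integral_mul_rpow {α : Type*} [MeasurableSpace α] {μ : Measure α} {f : α → ℝ}
    {G : ℝ → α → ℝ} (hp : 0 ≤ p) (hG : ∀ ε, AEStronglyMeasurable (G ε) μ)
    (hG₀ : ∀ ε ∈ Set.Ioc (0 : ℝ) 1, ∀ x, 0 ≤ G ε x ∧ G ε x ≤ G 1 x)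
    (hf : AEStronglyMeasurable f μ) (hint : Integrable (fun x ↦ f x * G 1 x ^ p) μ)
    (hcont : ∀ x, Continuous fun ε ↦ G ε x) :
    Tendsto (fun ε ↦ ∫ x, f x * G ε x ^ p ∂μ) (𝓝[>] 0) (𝓝 (∫ x, f x * G 0 x ^ p ∂μ)) := by
  refine tendsto_integral_filter_of_dominated_convergence (fun x ↦ ‖f x * G 1 x ^ p‖)
    (Eventually.of_forall fun ε ↦ ?_) ?_ hint.norm (Eventually.of_forall fun x ↦ ?_)
  · exact hf.mul ((Real.continuous_rpow_const hp).comp_aestronglyMeasurable (hG ε))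
  · filter_upwards [Ioc_mem_nhdsGT (zero_lt_one' ℝ)] with ε hε
    refine Eventually.of_forall fun x ↦ ?_
    obtain ⟨hpos, hle⟩ := hG₀ ε hε x
    rw [norm_mul, norm_mul, Real.norm_of_nonneg (Real.rpow_nonneg hpos p),
      Real.norm_of_nonneg (Real.rpow_nonneg (hpos.trans hle) p)]
    gcongr
  · have hx : Continuous fun ε ↦ f x * G ε x ^ p :=
      continuous_const.mul ((hcont x).rpow_const fun _ ↦ Or.inr hp)
    exact (hx.tendsto 0).mono_left nhdsWithin_le_nhds

theorem tendsto_integral_add_mul_rpow {X : Type*} [TopologicalSpace X] [MeasurableSpace X]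
    [OpensMeasurableSpace X] {μ : Measure X} [IsFiniteMeasureOnCompacts μ] {f g : X → ℝ}
    (hp : 0 < p) (hf : Continuous f) (hg : Continuous g) (hfc : HasCompactSupport f)
    (hgc : HasCompactSupport g) (hf₀ : ∀ x, 0 ≤ f x) (hg₀ : ∀ x, 0 ≤ g x) :
    Tendsto (fun ε ↦ ∫ x, (f x + ε * g x) ^ p ∂μ) (𝓝[>] 0) (𝓝 (∫ x, f x ^ p ∂μ)) := by
  have hcont : ∀ ε : ℝ, Continuous fun x ↦ f x + ε * g x := fun ε ↦ by fun_prop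
  have hlim := tendsto_integral_mul_rpow (μ := μ) (f := fun _ ↦ 1)
    (G := fun ε x ↦ f x + ε * g x) hp.le
    (fun ε ↦ ((hcont ε).integrable_of_hasCompactSupport
      (hfc.add hgc.mul_left)).aestronglyMeasurable)
    (fun ε hε x ↦ ?_) aestronglyMeasurable_const ?_ (fun x ↦ by fun_prop)
  · simpa only [one_mul, zero_mul, add_zero] using hlim
  · have hfx := hf₀ x
    have hgx := hg₀ x
    obtain ⟨hε₀, hε₁⟩ := hε
    exact ⟨by positivity, by gcongr⟩
  · simpa only [one_mul] using integrable_rpow_of_hasCompactSupport hp (hcont 1)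
      (hfc.add hgc.mul_left)

theorem tendsto_integral_potential_mul_regAbs_rpow (hp : 0 < p) (hV : LocBddPotential Ω V)
    (hφt : IsTestFun Ω φ) (hφ : ∀ x, 0 ≤ φ x) (hut : IsTestFun Ω u)
    (hu : tsupport u ⊆ Function.support φ) :
    Tendsto (fun ε ↦ ∫ x in Ω, V x * regAbs ε φ u x ^ p) (𝓝[>] 0)
      (𝓝 (∫ x in Ω, V x * |u x| ^ p)) := by
  have hone := isAdapted_regAbs one_pos hφ hφt.1 hut.1 hu
  have hint : Integrable fun x ↦ V x * regAbs 1 φ u x ^ p := by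
    simpa only [abs_of_nonneg (hone.nonneg _)] using
      (hone.isTestFun hφt).integrable_potential_mul hp hV
  have hcont : ∀ ε, Continuous (regAbs ε φ u) := fun ε ↦
    ((hut.1.continuous.pow 2).add ((continuous_const.mul hφt.1.continuous).pow 2)).sqrt
  have hlim := tendsto_integral_mul_rpow (μ := volume.restrict Ω) (G := fun ε ↦ regAbs ε φ u) hp.le
    (fun ε ↦ (hcont ε).aestronglyMeasurable) (fun ε hε x ↦ ⟨Real.sqrt_nonneg _, ?_⟩)
    hV.1.aestronglyMeasurable hint.integrableOn (fun x ↦ by unfold regAbs; fun_prop)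
  · simpa only [regAbs, zero_mul, zero_pow two_ne_zero, add_zero, Real.sqrt_sq_eq_abs] using hlim
  · have hφx := hφ x
    obtain ⟨hε₀, hε₁⟩ := hε
    unfold regAbs
    gcongr

theorem energyQ_regAbs_le (hp : 0 < p) (hV : LocBddPotential Ω V) (hφt : IsTestFun Ω φ)
    (hφ : ∀ x, 0 ≤ φ x) (hut : IsTestFun Ω u) (hu : tsupport u ⊆ Function.support φ) {ε : ℝ}
    (hε : 0 < ε) :
    energyQ Ω V p (regAbs ε φ u) ≤ (∫ x in Ω, (‖gradient u x‖ + ε * ‖gradient φ x‖) ^ p) +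
      ∫ x in Ω, V x * regAbs ε φ u x ^ p := by
  have hr := isAdapted_regAbs hε hφ hφt.1 hut.1 hu
  have hrt := hr.isTestFun hφt
  have hgrad := norm_gradient_regAbs_le hε hφ (fun x ↦ hφt.differentiableAt x)
    (fun x ↦ hut.differentiableAt x) hu
  rw [energyQ, integral_add (hrt.integrable_gradient_rpow hp).integrableOn
    (hrt.integrable_potential_mul hp hV).integrableOn]
  simp only [abs_of_nonneg (hr.nonneg _)]
  gcongr ?_ + _
  refine integral_mono (hrt.integrable_gradient_rpow hp).integrableOn (Integrable.integrableOn ?_)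
    fun x ↦ Real.rpow_le_rpow (norm_nonneg _) (hgrad x) hp.le
  have hcu := hut.continuous_gradient
  have hcφ := hφt.continuous_gradient
  refine integrable_rpow_of_hasCompactSupport hp (by fun_prop) ?_
  exact hut.hasCompactSupport_gradient.norm.add
    hφt.hasCompactSupport_gradient.norm.mul_left

theorem eventually_energyQ_regAbs_le (hp : 0 < p) (hV : LocBddPotential Ω V) (hφt : IsTestFun Ω φ)
    (hφ : ∀ x, 0 ≤ φ x) (hut : IsTestFun Ω u) (hu : tsupport u ⊆ Function.support φ) {η : ℝ}
    (hη : 0 < η) : ∀ᶠ ε in 𝓝[>] (0 : ℝ), energyQ Ω V p (regAbs ε φ u) ≤ energyQ Ω V p u + η := by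
  have hlim := (tendsto_integral_add_mul_rpow (μ := volume.restrict Ω) hp
      hut.continuous_gradient.norm hφt.continuous_gradient.norm
      hut.hasCompactSupport_gradient.norm
      hφt.hasCompactSupport_gradient.norm
      (fun _ ↦ norm_nonneg _) fun _ ↦ norm_nonneg _).add
    (tendsto_integral_potential_mul_regAbs_rpow hp hV hφt hφ hut hu)
  rw [← integral_add (hut.integrable_gradient_rpow hp).integrableOn
    (hut.integrable_potential_mul hp hV).integrableOn] at hlim
  filter_upwards [hlim.eventually_lt_const (lt_add_of_pos_right _ hη), self_mem_nhdsWithin]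
    with ε hlt hε
  exact (energyQ_regAbs_le hp hV hφt hφ hut hu hε).trans hlt.le

end Energy

section PSum

variable {α : Type*} {p : ℝ} {f g : α → ℝ} {x : α}

/-- The pointwise `ℓ^p` norm of the pair `(f, g)`. -/
def pSum (p : ℝ) (f g : α → ℝ) (x : α) : ℝ := (f x ^ p + g x ^ p) ^ p⁻¹

theorem pSum_rpow (hp : p ≠ 0) (hf : 0 ≤ f x) (hg : 0 ≤ g x) :
    pSum p f g x ^ p = f x ^ p + g x ^ p :=
  Real.rpow_inv_rpow (by positivity) hp

theorem pSum_pos (hf : 0 < f x) (hg : 0 < g x) : 0 < pSum p f g x :=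
  Real.rpow_pos_of_pos (by positivity) _

end PSum

section LogGradient

variable {F : Type*} [NormedAddCommGroup F] [InnerProductSpace ℝ F] [CompleteSpace F]
  {f g : F → ℝ} {p : ℝ} {x : F}

/-- The logarithmic gradient `∇f / f`, which is `∇(log f)` where `f` is positive. -/
def logGrad (f : F → ℝ) (x : F) : F := (f x)⁻¹ • gradient f x

theorem norm_gradient_rpow_eq (hf : 0 < f x) :
    ‖gradient f x‖ ^ p = f x ^ p * ‖logGrad f x‖ ^ p := by
  rw [← norm_smul_rpow hf.le, logGrad, smul_inv_smul₀ hf.ne']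

theorem logGrad_pSum (hp : p ≠ 0) (hf : DifferentiableAt ℝ f x) (hg : DifferentiableAt ℝ g x)
    (hfx : 0 < f x) (hgx : 0 < g x) :
    logGrad (pSum p f g) x = (f x ^ p / (f x ^ p + g x ^ p)) • logGrad f x +
      (g x ^ p / (f x ^ p + g x ^ p)) • logGrad g x := by
  have hd := ((hf.hasFDerivAt.rpow_const (p := p) (Or.inl hfx.ne')).fun_add
    (hg.hasFDerivAt.rpow_const (p := p) (Or.inl hgx.ne'))).rpow_const (p := p⁻¹)
      (Or.inl (by positivity))
  refine ext_inner_right ℝ fun y ↦ ?_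
  simp only [logGrad, inner_add_left, real_inner_smul_left, inner_gradient_left]
  rw [show fderiv ℝ (pSum p f g) x = _ from hd.fderiv]
  simp only [add_apply, smul_apply, smul_eq_mul, pSum]
  rw [Real.rpow_sub_one (by positivity), Real.rpow_sub_one hfx.ne', Real.rpow_sub_one hgx.ne']
  field_simp

/-- The loss of `p`-energy when `f` and `g` are replaced by `pSum p f g`. -/
def energyDeficit (p : ℝ) (f g : F → ℝ) (x : F) : ℝ :=
  ‖gradient f x‖ ^ p + ‖gradient g x‖ ^ p - ‖gradient (pSum p f g) x‖ ^ p

theorem energyDeficit_eq_convexityDeficit (hp : p ≠ 0) (hf : DifferentiableAt ℝ f x)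
    (hg : DifferentiableAt ℝ g x) (hfx : 0 < f x) (hgx : 0 < g x) :
    energyDeficit p f g x =
      convexityDeficit p (f x ^ p) (g x ^ p) (logGrad f x) (logGrad g x) := by
  rw [energyDeficit, convexityDeficit, norm_gradient_rpow_eq hfx, norm_gradient_rpow_eq hgx,
    norm_gradient_rpow_eq (pSum_pos hfx hgx), logGrad_pSum hp hf hg hfx hgx,
    pSum_rpow hp hfx.le hgx.le]

theorem energyDeficit_nonneg_of_pos (hp : 1 ≤ p) (hf : DifferentiableAt ℝ f x)
    (hg : DifferentiableAt ℝ g x) (hfx : 0 < f x) (hgx : 0 < g x) : 0 ≤ energyDeficit p f g x := by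
  rw [energyDeficit_eq_convexityDeficit (by linarith) hf hg hfx hgx]
  exact convexityDeficit_nonneg hp (by positivity) (by positivity) _ _

/-- The part of the energy deficit that measures the distance between the logarithmic gradients. -/
def logDeficit (p : ℝ) (f g : F → ℝ) (x : F) : ℝ :=
  f x ^ p * g x ^ p / (f x ^ p + g x ^ p) * ‖logGrad f x - logGrad g x‖ ^ p

theorem IsGapBound.logDeficit_le {κ C : ℝ} (h : IsGapBound F p κ C) (hp : 1 ≤ p) (hC : 0 ≤ C)
    (hκ : 0 ≤ κ) (hf : DifferentiableAt ℝ f x) (hg : DifferentiableAt ℝ g x) (hfx : 0 < f x)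
    (hgx : 0 < g x) :
    logDeficit p f g x ≤ C * energyDeficit p f g x + κ * ‖gradient f x‖ ^ p := by
  rw [energyDeficit_eq_convexityDeficit (by linarith) hf hg hfx hgx, norm_gradient_rpow_eq hfx]
  exact h.mul_norm_sub_rpow_le hp hC hκ (by positivity) (by positivity) _ _

end LogGradient

section DeficitIntegral

variable {d : ℕ} {Ω K : Set (Euc d)} {V φ a b : Euc d → ℝ} {p κ C : ℝ}

theorem isAdapted_pSum (hp : 0 < p) (hφ : ∀ x, 0 ≤ φ x) (hφs : ContDiff ℝ (⊤ : ℕ∞) φ)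
    (ha : IsAdapted φ a) (hb : IsAdapted φ b) : IsAdapted φ (pSum p a b) := by
  have hzero : ∀ x, φ x = 0 → ∃ c ≥ 0, ∀ᶠ y in 𝓝 x, pSum p a b y = c * φ y := by
    intro x hx
    obtain ⟨s, hs, has⟩ := ha.eventuallyEq x hx
    obtain ⟨t, ht, hbt⟩ := hb.eventuallyEq x hx
    refine ⟨(s ^ p + t ^ p) ^ p⁻¹, by positivity, ?_⟩
    filter_upwards [has, hbt] with y hsy hty
    have hφy := hφ y
    rw [pSum, hsy, hty, Real.mul_rpow hs hφy, Real.mul_rpow ht hφy, ← add_mul,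
      Real.mul_rpow (by positivity) (by positivity), Real.rpow_rpow_inv hφy hp.ne']
  refine ⟨contDiff_iff_contDiffAt.2 fun x ↦ ?_,
    fun x hx ↦ pSum_pos (ha.pos x hx) (hb.pos x hx), hzero⟩
  by_cases hx : φ x = 0
  · obtain ⟨c, -, hc⟩ := hzero x hx
    exact (contDiff_const.mul hφs).contDiffAt.congr_of_eventuallyEq hc
  · have hax := ha.pos x hx
    have hbx := hb.pos x hx
    exact ((ha.contDiff.contDiffAt.rpow_const_of_ne hax.ne').add
      (hb.contDiff.contDiffAt.rpow_const_of_ne hbx.ne')).rpow_const_of_ne (by positivity)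

theorem IsAdapted.gradient_eq_zero (ha : IsAdapted φ a) {x : Euc d} (hx : φ x = 0) :
    gradient a x = 0 := by
  have hmin : IsLocalMin a x := Eventually.of_forall fun y ↦ by
    rw [ha.eq_zero hx]
    exact ha.nonneg y
  rw [gradient, hmin.fderiv_eq_zero, map_zero]

theorem IsAdapted.energyDeficit_nonneg (hp : 1 ≤ p) (hφ : ∀ x, 0 ≤ φ x)
    (hφs : ContDiff ℝ (⊤ : ℕ∞) φ) (ha : IsAdapted φ a) (hb : IsAdapted φ b) (x : Euc d) :
    0 ≤ energyDeficit p a b x := by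
  have hp₀ : 0 < p := by linarith
  by_cases hx : φ x = 0
  · rw [energyDeficit, ha.gradient_eq_zero hx, hb.gradient_eq_zero hx,
      (isAdapted_pSum hp₀ hφ hφs ha hb).gradient_eq_zero hx, norm_zero, Real.zero_rpow hp₀.ne',
      add_zero, sub_zero]
  · exact energyDeficit_nonneg_of_pos hp (ha.contDiff.differentiable (by simp) x)
      (hb.contDiff.differentiable (by simp) x) (ha.pos x hx) (hb.pos x hx)

theorem integrable_energyDeficit (hp : 0 < p) (hφ : ∀ x, 0 ≤ φ x) (hφt : IsTestFun Ω φ)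
    (ha : IsAdapted φ a) (hb : IsAdapted φ b) : Integrable (energyDeficit p a b) :=
  (((ha.isTestFun hφt).integrable_gradient_rpow hp).add
    ((hb.isTestFun hφt).integrable_gradient_rpow hp)).sub
      (((isAdapted_pSum hp hφ hφt.1 ha hb).isTestFun hφt).integrable_gradient_rpow hp)

theorem integral_energyDeficit (hp : 0 < p) (hV : LocBddPotential Ω V) (hφ : ∀ x, 0 ≤ φ x)
    (hφt : IsTestFun Ω φ) (ha : IsAdapted φ a) (hb : IsAdapted φ b) :
    ∫ x in Ω, energyDeficit p a b x =
      energyQ Ω V p a + energyQ Ω V p b - energyQ Ω V p (pSum p a b) := by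
  have hm := isAdapted_pSum hp hφ hφt.1 ha hb
  have hIa := ((ha.isTestFun hφt).integrable_energy hp hV).integrableOn (s := Ω)
  have hIb := ((hb.isTestFun hφt).integrable_energy hp hV).integrableOn (s := Ω)
  have hIm := ((hm.isTestFun hφt).integrable_energy hp hV).integrableOn (s := Ω)
  rw [energyQ, energyQ, energyQ, ← integral_add' hIa hIb,
    ← integral_sub' (hIa.add hIb) hIm]
  refine integral_congr_ae (Eventually.of_forall fun x ↦ ?_)
  simp only [energyDeficit, Pi.add_apply, Pi.sub_apply, abs_of_nonneg (ha.nonneg x),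
    abs_of_nonneg (hb.nonneg x), abs_of_nonneg (hm.nonneg x),
    pSum_rpow hp.ne' (ha.nonneg x) (hb.nonneg x)]
  ring

theorem lintegral_energyDeficit_le (hp : 1 ≤ p) (hV : LocBddPotential Ω V)
    (hQ : ∀ u, IsTestFun Ω u → 0 ≤ energyQ Ω V p u) (hφ : ∀ x, 0 ≤ φ x) (hφt : IsTestFun Ω φ)
    (ha : IsAdapted φ a) (hb : IsAdapted φ b) :
    ∫⁻ x in Ω, ENNReal.ofReal (energyDeficit p a b x) ≤
      ENNReal.ofReal (energyQ Ω V p a + energyQ Ω V p b) := by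
  have hp₀ : 0 < p := by linarith
  have hm := (isAdapted_pSum hp₀ hφ hφt.1 ha hb).isTestFun hφt
  rw [← ofReal_integral_eq_lintegral_ofReal
      (integrable_energyDeficit hp₀ hφ hφt ha hb).integrableOn
      (Eventually.of_forall (ha.energyDeficit_nonneg hp hφ hφt.1 hb)),
    integral_energyDeficit hp₀ hV hφ hφt ha hb]
  exact ENNReal.ofReal_le_ofReal (sub_le_self _ (hQ _ hm))

theorem lintegral_logDeficit_le (hp : 1 ≤ p) (hV : LocBddPotential Ω V)
    (hQ : ∀ u, IsTestFun Ω u → 0 ≤ energyQ Ω V p u) (hgap : IsGapBound (Euc d) p κ C)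
    (hC : 0 ≤ C) (hκ : 0 ≤ κ) (hφ : ∀ x, 0 ≤ φ x) (hφt : IsTestFun Ω φ) (ha : IsAdapted φ a)
    (hb : IsAdapted φ b) (hK : MeasurableSet K) (hKΩ : K ⊆ Ω) (hKφ : ∀ x ∈ K, φ x ≠ 0) :
    ∫⁻ x in K, ENNReal.ofReal (logDeficit p a b x) ≤
      ENNReal.ofReal C * ENNReal.ofReal (energyQ Ω V p a + energyQ Ω V p b) +
        ENNReal.ofReal κ * ∫⁻ x in K, ENNReal.ofReal (‖gradient a x‖ ^ p) := by
  have hp₀ : 0 < p := by linarith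
  have hgrad : Measurable fun x ↦ ENNReal.ofReal (‖gradient a x‖ ^ p) :=
    ((ha.isTestFun hφt).continuous_gradient.norm.rpow_const
      fun _ ↦ Or.inr hp₀.le).measurable.ennreal_ofReal
  calc ∫⁻ x in K, ENNReal.ofReal (logDeficit p a b x)
      ≤ ∫⁻ x in K, (ENNReal.ofReal C * ENNReal.ofReal (energyDeficit p a b x) +
          ENNReal.ofReal κ * ENNReal.ofReal (‖gradient a x‖ ^ p)) := by
        refine setLIntegral_mono' hK fun x hx ↦ ?_
        have hnn := ha.energyDeficit_nonneg hp hφ hφt.1 hb x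
        rw [← ENNReal.ofReal_mul hC, ← ENNReal.ofReal_mul hκ,
          ← ENNReal.ofReal_add (by positivity) (by positivity)]
        exact ENNReal.ofReal_le_ofReal (hgap.logDeficit_le hp hC hκ
          (ha.contDiff.differentiable (by simp) x) (hb.contDiff.differentiable (by simp) x)
          (ha.pos x (hKφ x hx)) (hb.pos x (hKφ x hx)))
    _ = ENNReal.ofReal C * (∫⁻ x in K, ENNReal.ofReal (energyDeficit p a b x)) +
          ENNReal.ofReal κ * ∫⁻ x in K, ENNReal.ofReal (‖gradient a x‖ ^ p) := by
        rw [lintegral_add_right _ (hgrad.const_mul _), lintegral_const_mul _ hgrad,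
          lintegral_const_mul' _ _ ENNReal.ofReal_ne_top]
    _ ≤ _ := by
        gcongr
        exact (lintegral_mono_set hKΩ).trans (lintegral_energyDeficit_le hp hV hQ hφ hφt ha hb)

theorem norm_gradient_rpow_div_le_logDeficit {x : Euc d} (ha : 1 ≤ a x) (hda : gradient a x = 0)
    (hb : 0 < b x) (hp : 0 ≤ p) : ‖gradient b x‖ ^ p / (1 + b x ^ p) ≤ logDeficit p a b x := by
  have hA : 1 ≤ a x ^ p := Real.one_le_rpow ha hp
  have : 0 < b x ^ p := by positivity
  rw [logDeficit, logGrad, hda, smul_zero, zero_sub, norm_neg, norm_gradient_rpow_eq hb,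
    mul_div_right_comm]
  refine mul_le_mul_of_nonneg_right ?_ (by positivity)
  rw [div_le_div_iff₀ (by positivity) (by positivity)]
  nlinarith [mul_nonneg (sub_nonneg.2 hA) (sq_nonneg (b x ^ p))]

theorem lintegral_norm_gradient_rpow_div_le (hp : 1 ≤ p) (hV : LocBddPotential Ω V)
    (hQ : ∀ u, IsTestFun Ω u → 0 ≤ energyQ Ω V p u) (hgap : IsGapBound (Euc d) p κ C)
    (hC : 0 ≤ C) (hκ : 0 ≤ κ) (hφ : ∀ x, 0 ≤ φ x) (hφt : IsTestFun Ω φ) (ha : IsAdapted φ a)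
    (hb : IsAdapted φ b) (hK : MeasurableSet K) (hKΩ : K ⊆ Ω) (hKφ : ∀ x ∈ K, φ x ≠ 0)
    (ha₁ : ∀ x ∈ K, 1 ≤ a x) (hda : ∀ x ∈ K, gradient a x = 0) :
    ∫⁻ x in K, ENNReal.ofReal (‖gradient b x‖ ^ p / (1 + b x ^ p)) ≤
      ENNReal.ofReal C * ENNReal.ofReal (energyQ Ω V p a + energyQ Ω V p b) := by
  have hp₀ : 0 < p := by linarith
  have hzero : ∫⁻ x in K, ENNReal.ofReal (‖gradient a x‖ ^ p) = 0 := by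
    refine (setLIntegral_congr_fun hK fun x hx ↦ ?_).trans lintegral_zero
    simp only [hda x hx, norm_zero, Real.zero_rpow hp₀.ne', ENNReal.ofReal_zero]
  calc ∫⁻ x in K, ENNReal.ofReal (‖gradient b x‖ ^ p / (1 + b x ^ p))
      ≤ ∫⁻ x in K, ENNReal.ofReal (logDeficit p a b x) :=
        setLIntegral_mono' hK fun x hx ↦ ENNReal.ofReal_le_ofReal <|
          norm_gradient_rpow_div_le_logDeficit (ha₁ x hx) (hda x hx) (hb.pos x (hKφ x hx)) hp₀.le
    _ ≤ _ := lintegral_logDeficit_le hp hV hQ hgap hC hκ hφ hφt ha hb hK hKΩ hKφ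
    _ = _ := by rw [hzero, mul_zero, add_zero]

end DeficitIntegral

section Translation

theorem lintegral_rpow_le_measure_univ_rpow_mul {α : Type*} [MeasurableSpace α] {μ : Measure α}
    {p : ℝ} (hp : 1 ≤ p) {f : α → ENNReal} (hf : AEMeasurable f μ) :
    (∫⁻ x, f x ∂μ) ^ p ≤ μ Set.univ ^ (p - 1) * ∫⁻ x, f x ^ p ∂μ := by
  have hp₀ : 0 < p := by linarith
  have h := eLpNorm'_le_eLpNorm'_mul_rpow_measure_univ one_pos hp hf.aestronglyMeasurable
  simp only [eLpNorm', enorm_eq_self, ENNReal.rpow_one, div_one] at h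
  calc (∫⁻ x, f x ∂μ) ^ p
      ≤ ((∫⁻ x, f x ^ p ∂μ) ^ (1 / p) * μ Set.univ ^ (1 - 1 / p)) ^ p := by gcongr
    _ = μ Set.univ ^ (p - 1) * ∫⁻ x, f x ^ p ∂μ := by
      rw [ENNReal.mul_rpow_of_nonneg _ _ hp₀.le, ← ENNReal.rpow_mul, ← ENNReal.rpow_mul,
        one_div_mul_cancel hp₀.ne', ENNReal.rpow_one, mul_comm, sub_mul, one_mul,
        one_div_mul_cancel hp₀.ne']

theorem ennreal_rpow_eq_rpow_sub_one_mul {p : ℝ} (hp : 1 ≤ p) (a : ENNReal) :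
    a ^ p = a ^ (p - 1) * a := by
  conv_lhs => rw [← sub_add_cancel p 1]
  rw [ENNReal.rpow_add_of_nonneg _ _ (sub_nonneg.2 hp) zero_le_one, ENNReal.rpow_one]

theorem add_min_rpow_le {p : ℝ} (hp : 1 ≤ p) (a b c : ENNReal) :
    (a + min b c) ^ p ≤ 2 ^ (p - 1) * (a ^ p + c ^ (p - 1) * b) := by
  calc (a + min b c) ^ p ≤ 2 ^ (p - 1) * (a ^ p + min b c ^ p) :=
        ENNReal.rpow_add_le_mul_rpow_add_rpow _ _ hp
    _ ≤ 2 ^ (p - 1) * (a ^ p + c ^ (p - 1) * b) := by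
        have : 0 ≤ p - 1 := sub_nonneg.2 hp
        rw [ennreal_rpow_eq_rpow_sub_one_mul hp (min b c)]
        gcongr
        exacts [min_le_right b c, min_le_left b c]

variable {E : Type*} [NormedAddCommGroup E] [NormedSpace ℝ E]

theorem enorm_sub_le_lintegral_fderiv {G : Type*} [NormedAddCommGroup G] [NormedSpace ℝ G]
    {Ω : Set E} (hΩ : IsOpen Ω) {T : E → G} (hT : ContDiffOn ℝ 1 T Ω) {x e : E} {a b : ℝ}
    (hab : a ≤ b) (hseg : ∀ t ∈ Set.Icc a b, x + t • e ∈ Ω) :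
    ‖T (x + b • e) - T (x + a • e)‖ₑ ≤ ∫⁻ t in Set.Icc a b, ‖fderiv ℝ T (x + t • e) e‖ₑ := by
  have hline : ∀ t : ℝ, HasDerivAt (fun t : ℝ ↦ x + t • e) e t := fun t ↦ by
    simpa using ((hasDerivAt_id t).smul_const e).const_add x
  have hcomp : ContDiffOn ℝ 1 (fun t : ℝ ↦ T (x + t • e)) (Set.Icc a b) :=
    hT.comp (by fun_prop) hseg
  have hderiv : ∀ t ∈ Set.Icc a b,
      deriv (fun t : ℝ ↦ T (x + t • e)) t = fderiv ℝ T (x + t • e) e := fun t ht ↦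
    (((hT.differentiableOn one_ne_zero).differentiableAt
      (hΩ.mem_nhds (hseg t ht))).hasFDerivAt.comp_hasDerivAt t (hline t)).deriv
  refine (enorm_sub_le_lintegral_deriv_of_contDiffOn_Icc hcomp hab).trans_eq ?_
  exact setLIntegral_congr_fun measurableSet_Icc fun t ht ↦ by rw [hderiv t ht]

variable [MeasurableSpace E] [BorelSpace E] {e : E} {τ p : ℝ}

theorem enorm_sub_rpow_le_lintegral_segment {G : Type*} [NormedAddCommGroup G] [NormedSpace ℝ G]
    (hp : 1 ≤ p) {T : E → G} (hT : ContDiff ℝ 1 T) {S : ENNReal} {x : E}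
    (hS : ‖T (x + τ • e) - T x‖ₑ ≤ S) (hτ : 0 ≤ τ) {g r : E → ENNReal} (hg : Measurable g)
    (hgr : ∀ t ∈ Set.Icc 0 τ, ‖fderiv ℝ T (x + t • e) e‖ₑ ≤ g (x + t • e) + r (x + t • e)) :
    ‖T (x + τ • e) - T x‖ₑ ^ p ≤
      2 ^ (p - 1) * (ENNReal.ofReal τ ^ (p - 1) * (∫⁻ t in Set.Icc 0 τ, g (x + t • e) ^ p) +
        S ^ (p - 1) * ∫⁻ t in Set.Icc 0 τ, r (x + t • e)) := by
  have hgline : Measurable fun t : ℝ ↦ g (x + t • e) := hg.comp (by fun_prop)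
  have hjensen := lintegral_rpow_le_measure_univ_rpow_mul (μ := volume.restrict (Set.Icc 0 τ)) hp
    hgline.aemeasurable
  rw [Measure.restrict_apply_univ, Real.volume_Icc, sub_zero] at hjensen
  have hFTC : ‖T (x + τ • e) - T x‖ₑ ≤
      (∫⁻ t in Set.Icc 0 τ, g (x + t • e)) + ∫⁻ t in Set.Icc 0 τ, r (x + t • e) := by
    rw [← lintegral_add_left hgline]
    refine le_trans ?_ (setLIntegral_mono' measurableSet_Icc hgr)
    simpa using enorm_sub_le_lintegral_fderiv isOpen_univ hT.contDiffOn hτ fun t _ ↦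
      Set.mem_univ (x + t • e)
  calc ‖T (x + τ • e) - T x‖ₑ ^ p
      ≤ ((∫⁻ t in Set.Icc 0 τ, g (x + t • e)) +
          min (∫⁻ t in Set.Icc 0 τ, r (x + t • e)) S) ^ p := by
        refine ENNReal.rpow_le_rpow ?_ (by linarith)
        rw [← min_add_add_left]
        exact le_min hFTC (hS.trans le_add_self)
    _ ≤ _ := add_min_rpow_le hp _ _ _
    _ ≤ _ := by gcongr

variable [SecondCountableTopology E] {μ : Measure E} [SFinite μ]
  [μ.IsAddRightInvariant] {K K' : Set E}

theorem measurable_lintegral_segment (τ : ℝ) (e : E) {h : E → ENNReal} (hh : Measurable h) :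
    Measurable fun x ↦ ∫⁻ t in Set.Icc 0 τ, h (x + t • e) :=
  Measurable.lintegral_prod_right' (f := fun q : E × ℝ ↦ h (q.1 + q.2 • e))
    (hh.comp (by fun_prop))

theorem lintegral_lintegral_segment_le (hK : MeasurableSet K) (hK' : MeasurableSet K')
    (hKK' : ∀ x ∈ K, ∀ t ∈ Set.Icc 0 τ, x + t • e ∈ K') {h : E → ENNReal} (hh : Measurable h) :
    ∫⁻ x in K, (∫⁻ t in Set.Icc 0 τ, h (x + t • e)) ∂μ ≤ ENNReal.ofReal τ * ∫⁻ y in K', h y ∂μ := by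
  have hmeas : Measurable fun q : E × ℝ ↦ h (q.1 + q.2 • e) := hh.comp (by fun_prop)
  rw [lintegral_lintegral_swap hmeas.aemeasurable]
  calc ∫⁻ t in Set.Icc 0 τ, (∫⁻ x in K, h (x + t • e) ∂μ)
      ≤ ∫⁻ _ in Set.Icc 0 τ, (∫⁻ y in K', h y ∂μ) := by
        refine setLIntegral_mono' measurableSet_Icc fun t ht ↦ ?_
        rw [← lintegral_indicator hK, ← lintegral_indicator hK',
          ← lintegral_add_right_eq_self (K'.indicator h) (t • e)]
        refine lintegral_mono fun x ↦ Set.indicator_apply_le' (fun hx ↦ ?_) fun _ ↦ zero_le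
        rw [Set.indicator_of_mem (hKK' x hx t ht)]
    _ = ENNReal.ofReal τ * ∫⁻ y in K', h y ∂μ := by
        rw [setLIntegral_const, Real.volume_Icc, sub_zero, mul_comm]

theorem lintegral_enorm_sub_rpow_le {G : Type*} [NormedAddCommGroup G] [NormedSpace ℝ G]
    (hp : 1 ≤ p) {T : E → G} (hT : ContDiff ℝ 1 T) {S : ENNReal} (hS : ∀ x y, ‖T y - T x‖ₑ ≤ S)
    (hτ : 0 ≤ τ) (hK : MeasurableSet K) (hK' : MeasurableSet K')
    (hKK' : ∀ x ∈ K, ∀ t ∈ Set.Icc 0 τ, x + t • e ∈ K') {g r : E → ENNReal} (hg : Measurable g)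
    (hr : Measurable r) (hgr : ∀ y ∈ K', ‖fderiv ℝ T y e‖ₑ ≤ g y + r y) :
    ∫⁻ x in K, ‖T (x + τ • e) - T x‖ₑ ^ p ∂μ ≤
      2 ^ (p - 1) * (ENNReal.ofReal τ ^ p * (∫⁻ y in K', g y ^ p ∂μ) +
        S ^ (p - 1) * (ENNReal.ofReal τ * ∫⁻ y in K', r y ∂μ)) := by
  have hgp := hg.pow_const p
  calc ∫⁻ x in K, ‖T (x + τ • e) - T x‖ₑ ^ p ∂μ
      ≤ ∫⁻ x in K, 2 ^ (p - 1) *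
          (ENNReal.ofReal τ ^ (p - 1) * (∫⁻ t in Set.Icc 0 τ, g (x + t • e) ^ p) +
            S ^ (p - 1) * ∫⁻ t in Set.Icc 0 τ, r (x + t • e)) ∂μ :=
        setLIntegral_mono' hK fun x hx ↦ enorm_sub_rpow_le_lintegral_segment hp hT (hS _ _) hτ hg
          fun t ht ↦ hgr _ (hKK' x hx t ht)
    _ = 2 ^ (p - 1) *
          (ENNReal.ofReal τ ^ (p - 1) * (∫⁻ x in K, (∫⁻ t in Set.Icc 0 τ, g (x + t • e) ^ p) ∂μ) +
            S ^ (p - 1) * ∫⁻ x in K, (∫⁻ t in Set.Icc 0 τ, r (x + t • e)) ∂μ) := by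
        have hmg := measurable_lintegral_segment τ e hgp
        have hmr := measurable_lintegral_segment τ e hr
        rw [lintegral_const_mul _ (by fun_prop),
          lintegral_add_left (hmg.const_mul _), lintegral_const_mul _ hmg,
          lintegral_const_mul _ hmr]
    _ ≤ 2 ^ (p - 1) * (ENNReal.ofReal τ ^ (p - 1) * (ENNReal.ofReal τ * ∫⁻ y in K', g y ^ p ∂μ) +
          S ^ (p - 1) * (ENNReal.ofReal τ * ∫⁻ y in K', r y ∂μ)) := by
        gcongr
        · exact lintegral_lintegral_segment_le hK hK' hKK' hgp
        · exact lintegral_lintegral_segment_le hK hK' hKK' hr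
    _ = _ := by rw [← mul_assoc (_ ^ (p - 1)), ← ennreal_rpow_eq_rpow_sub_one_mul hp]

end Translation

section SmoothStep

/-- `χ` is a smooth step from `0` on `(-∞, δ]` to `1` on `[2δ, ∞)` with slope at most `c`. -/
structure IsSmoothStep (δ c : ℝ) (χ : ℝ → ℝ) : Prop where
  contDiff : ContDiff ℝ 1 χ
  nonneg : ∀ t, 0 ≤ χ t
  le_one : ∀ t, χ t ≤ 1
  eq_zero : ∀ t ≤ δ, χ t = 0
  eq_one : ∀ t, 2 * δ ≤ t → χ t = 1
  abs_deriv_le : ∀ t, |deriv χ t| ≤ c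

variable {δ c : ℝ} {χ : ℝ → ℝ}

theorem IsSmoothStep.deriv_eq_zero (hχ : IsSmoothStep δ c χ) {t : ℝ} (ht : 2 * δ < t) :
    deriv χ t = 0 := by
  have h : χ =ᶠ[𝓝 t] fun _ ↦ 1 := (lt_mem_nhds ht).mono fun y hy ↦ hχ.eq_one y hy.le
  rw [h.deriv_eq, deriv_const]

theorem exists_isSmoothStep (hδ : 0 < δ) : ∃ χ c, IsSmoothStep δ c χ := by
  set χ : ℝ → ℝ := fun t ↦ Real.smoothTransition (t / δ - 1)
  have hχ : ContDiff ℝ 1 χ :=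
    (Real.smoothTransition.contDiff (n := 1)).comp (by fun_prop : ContDiff ℝ 1 fun t ↦ t / δ - 1)
  have hzero : ∀ t ≤ δ, χ t = 0 := fun t ht ↦
    Real.smoothTransition.zero_of_nonpos (sub_nonpos.2 ((div_le_one hδ).2 ht))
  have hone : ∀ t, 2 * δ ≤ t → χ t = 1 := fun t ht ↦
    Real.smoothTransition.one_of_one_le (by linarith [(le_div_iff₀ hδ).2 ht])
  have hsupp : HasCompactSupport (deriv χ) := by
    refine HasCompactSupport.intro (isCompact_Icc (a := δ) (b := 2 * δ)) fun t ht ↦ ?_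
    rcases not_and_or.1 ht with h | h
    · have hc : χ =ᶠ[𝓝 t] fun _ ↦ 0 := (gt_mem_nhds (not_le.1 h)).mono fun y hy ↦ hzero y hy.le
      rw [hc.deriv_eq, deriv_const]
    · have hc : χ =ᶠ[𝓝 t] fun _ ↦ 1 := (lt_mem_nhds (not_le.1 h)).mono fun y hy ↦ hone y hy.le
      rw [hc.deriv_eq, deriv_const]
  obtain ⟨c, hc⟩ := hsupp.exists_bound_of_continuous (hχ.continuous_deriv le_rfl)
  exact ⟨χ, c, hχ, fun _ ↦ Real.smoothTransition.nonneg _, fun _ ↦ Real.smoothTransition.le_one _,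
    hzero, hone, hc⟩

end SmoothStep

section StepRatio

variable {F : Type*} {χ : ℝ → ℝ} {f g : F → ℝ} {δ c p : ℝ} {x : F}

/-- The ratio `f / (f + g)`, cut off by the step `χ` where `g` is small. -/
def stepRatio (χ : ℝ → ℝ) (f g : F → ℝ) (x : F) : ℝ := χ (g x) * (f x / (f x + g x))

theorem stepRatio_mem_Icc (hχ : IsSmoothStep δ c χ) (hf : 0 ≤ f x) (hg : 0 ≤ g x) :
    stepRatio χ f g x ∈ Set.Icc 0 1 := by
  have hr : f x / (f x + g x) ∈ Set.Icc (0 : ℝ) 1 :=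
    ⟨by positivity, div_le_one_of_le₀ (le_add_of_nonneg_right hg) (by positivity)⟩
  exact ⟨mul_nonneg (hχ.nonneg _) hr.1, mul_le_one₀ (hχ.le_one _) hr.1 hr.2⟩

theorem tendsto_stepRatio {ι : Type*} {l : Filter ι} {a b : ι → F → ℝ} (hχ : IsSmoothStep δ c χ)
    (hδ : 0 < δ) (hf : 0 ≤ f x) (hg : 2 * δ < g x) (ha : Tendsto (fun k ↦ a k x) l (𝓝 (f x)))
    (hb : Tendsto (fun k ↦ b k x) l (𝓝 (g x))) :
    Tendsto (fun k ↦ stepRatio χ (a k) (b k) x) l (𝓝 (f x / (f x + g x))) := by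
  refine (ha.div (ha.add hb) (by linarith)).congr' ?_
  filter_upwards [hb.eventually_const_lt hg] with k hk
  rw [stepRatio, hχ.eq_one _ hk.le, one_mul]
  rfl

theorem contDiff_stepRatio {E : Type*} [NormedAddCommGroup E] [NormedSpace ℝ E] {f g : E → ℝ}
    (hχ : IsSmoothStep δ c χ) (hδ : 0 < δ) (hf : ContDiff ℝ 1 f)
    (hg : ContDiff ℝ 1 g) (hf₀ : ∀ x, 0 ≤ f x) : ContDiff ℝ 1 (stepRatio χ f g) := by
  refine contDiff_iff_contDiffAt.2 fun x ↦ ?_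
  rcases lt_or_ge (g x) δ with h | h
  · have hzero : stepRatio χ f g =ᶠ[𝓝 x] fun _ ↦ 0 := by
      filter_upwards [hg.continuous.continuousAt.eventually_lt continuousAt_const h] with y hy
      rw [stepRatio, hχ.eq_zero _ hy.le, zero_mul]
    exact contDiffAt_const.congr_of_eventuallyEq hzero
  · have hpos : f x + g x ≠ 0 := by linarith [hf₀ x]
    exact (hχ.contDiff.comp hg).contDiffAt.mul
      (hf.contDiffAt.div (hf.add hg).contDiffAt hpos)

theorem differentiableAt_div {E : Type*} [NormedAddCommGroup E] [NormedSpace ℝ E] {f g : E → ℝ}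
    {x : E} (hf : DifferentiableAt ℝ f x) (hg : DifferentiableAt ℝ g x)
    (hgx : g x ≠ 0) : DifferentiableAt ℝ (fun y ↦ f y / g y) x := by
  simpa only [div_eq_mul_inv] using hf.fun_mul (hg.fun_inv hgx)

variable [NormedAddCommGroup F] [InnerProductSpace ℝ F] [CompleteSpace F]

theorem gradient_div_add (hf : DifferentiableAt ℝ f x) (hg : DifferentiableAt ℝ g x)
    (hfx : 0 < f x) (hgx : 0 < g x) :
    gradient (fun y ↦ f y / (f y + g y)) x =
      (f x * g x / (f x + g x) ^ 2) • (logGrad f x - logGrad g x) := by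
  have hinv : HasFDerivAt (fun y ↦ (f y + g y)⁻¹)
      (-((f x + g x) ^ 2)⁻¹ • (fderiv ℝ f x + fderiv ℝ g x)) x :=
    (hasDerivAt_inv (by positivity : f x + g x ≠ 0)).comp_hasFDerivAt x
      (hf.hasFDerivAt.fun_add hg.hasFDerivAt)
  have hd := hf.hasFDerivAt.fun_mul hinv
  simp only [div_eq_mul_inv (f _)]
  refine ext_inner_right ℝ fun y ↦ ?_
  simp only [logGrad, real_inner_smul_left, inner_sub_left, inner_gradient_left]
  rw [hd.fderiv]
  simp only [smul_apply, add_apply, smul_eq_mul]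
  field_simp
  ring

theorem mul_norm_logGrad_sub_le (hp : 1 ≤ p) (hfx : 0 < f x) (hgx : 0 < g x) :
    f x * g x / (f x + g x) * ‖logGrad f x - logGrad g x‖ ≤ logDeficit p f g x ^ p⁻¹ := by
  have hp₀ : 0 < p := by linarith
  rw [Real.le_rpow_inv_iff_of_pos (by positivity) (by unfold logDeficit; positivity) hp₀,
    Real.mul_rpow (by positivity) (norm_nonneg _), Real.div_rpow (by positivity) (by positivity),
    Real.mul_rpow hfx.le hgx.le, logDeficit]
  gcongr
  exact Real.add_rpow_le_rpow_add hfx.le hgx.le hp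

theorem norm_gradient_stepRatio_le (hχ : IsSmoothStep δ c χ) (hδ : 0 < δ) (hp : 1 ≤ p)
    (hf : DifferentiableAt ℝ f x) (hg : DifferentiableAt ℝ g x) (hfx : 0 < f x) (hgx : 0 < g x) :
    ‖gradient (stepRatio χ f g) x‖ ≤
      δ⁻¹ * logDeficit p f g x ^ p⁻¹ + |deriv χ (g x)| * ‖gradient g x‖ := by
  set ρ : F → ℝ := fun y ↦ f y / (f y + g y)
  have hρ : DifferentiableAt ℝ ρ x := differentiableAt_div hf (hf.fun_add hg) (add_pos hfx hgx).ne'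
  have hχg : HasFDerivAt (χ ∘ g) (deriv χ (g x) • fderiv ℝ g x) x :=
    (hχ.contDiff.differentiable one_ne_zero _).hasDerivAt.comp_hasFDerivAt x hg.hasFDerivAt
  have hfd : fderiv ℝ (stepRatio χ f g) x =
      χ (g x) • fderiv ℝ ρ x + ρ x • deriv χ (g x) • fderiv ℝ g x :=
    (hχg.mul hρ.hasFDerivAt).fderiv
  have hratio : χ (g x) * ‖gradient ρ x‖ ≤ δ⁻¹ * logDeficit p f g x ^ p⁻¹ := by
    rcases le_or_gt (g x) δ with h | h
    · rw [hχ.eq_zero _ h, zero_mul]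
      unfold logDeficit
      positivity
    · calc χ (g x) * ‖gradient ρ x‖ ≤ ‖gradient ρ x‖ :=
            mul_le_of_le_one_left (norm_nonneg _) (hχ.le_one _)
        _ = (f x + g x)⁻¹ * (f x * g x / (f x + g x) * ‖logGrad f x - logGrad g x‖) := by
            rw [gradient_div_add hf hg hfx hgx, norm_smul_of_nonneg (by positivity)]
            field_simp
        _ ≤ δ⁻¹ * logDeficit p f g x ^ p⁻¹ := by
            gcongr
            exacts [by linarith, mul_norm_logGrad_sub_le hp hfx hgx]
  have hρ₁ : ρ x ≤ 1 := div_le_one_of_le₀ (by linarith) (by positivity)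
  calc ‖gradient (stepRatio χ f g) x‖
      ≤ χ (g x) * ‖gradient ρ x‖ + ρ x * (|deriv χ (g x)| * ‖gradient g x‖) := by
        rw [norm_gradient, norm_gradient, norm_gradient, hfd, ← Real.norm_eq_abs, ← norm_smul,
          ← norm_smul_of_nonneg (hχ.nonneg _), ← norm_smul_of_nonneg (by positivity : 0 ≤ ρ x)]
        exact norm_add_le _ _
    _ ≤ _ := add_le_add hratio (mul_le_of_le_one_left (by positivity) hρ₁)

/-- The error term in the gradient bound for `stepRatio`, supported where `χ` is not locally `1`. -/
def stepError (δ c : ℝ) (g : F → ℝ) : F → ENNReal :=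
  {y | g y ≤ 2 * δ}.indicator fun y ↦ ENNReal.ofReal (c * ‖gradient g y‖)

theorem enorm_fderiv_stepRatio_apply_le (hχ : IsSmoothStep δ c χ) (hδ : 0 < δ) (hp : 1 ≤ p)
    (hf : DifferentiableAt ℝ f x) (hg : DifferentiableAt ℝ g x) (hfx : 0 < f x) (hgx : 0 < g x)
    {e : F} (he : ‖e‖ ≤ 1) :
    ‖fderiv ℝ (stepRatio χ f g) x e‖ₑ ≤
      ENNReal.ofReal (δ⁻¹ * logDeficit p f g x ^ p⁻¹) + stepError δ c g x := by
  have hlog : 0 ≤ logDeficit p f g x := by unfold logDeficit; positivity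
  have hstep : ENNReal.ofReal (|deriv χ (g x)| * ‖gradient g x‖) ≤ stepError δ c g x := by
    rcases le_or_gt (g x) (2 * δ) with h | h
    · rw [stepError, Set.indicator_of_mem (show x ∈ {y | g y ≤ 2 * δ} from h)]
      gcongr
      exact hχ.abs_deriv_le _
    · rw [hχ.deriv_eq_zero h, abs_zero, zero_mul, ENNReal.ofReal_zero]
      exact zero_le
  calc ‖fderiv ℝ (stepRatio χ f g) x e‖ₑ
      ≤ ENNReal.ofReal ‖gradient (stepRatio χ f g) x‖ := by
        rw [← ofReal_norm, norm_gradient]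
        exact ENNReal.ofReal_le_ofReal
          ((ContinuousLinearMap.le_opNorm _ e).trans (mul_le_of_le_one_right (norm_nonneg _) he))
    _ ≤ ENNReal.ofReal (δ⁻¹ * logDeficit p f g x ^ p⁻¹ + |deriv χ (g x)| * ‖gradient g x‖) :=
        ENNReal.ofReal_le_ofReal (norm_gradient_stepRatio_le hχ hδ hp hf hg hfx hgx)
    _ ≤ _ := by
        rw [ENNReal.ofReal_add (by positivity) (by positivity)]
        gcongr

end StepRatio

section AlmostEverywhere

theorem lintegral_le_of_tendsto_ae {α ι : Type*} [MeasurableSpace α] {μ : Measure α}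
    {l : Filter ι} [l.IsCountablyGenerated] [l.NeBot] {f : ι → α → ENNReal} {g : α → ENNReal}
    {R : ι → ENNReal} {r : ENNReal} (hf : ∀ᶠ i in l, AEMeasurable (f i) μ)
    (hfg : ∀ᵐ x ∂μ, Tendsto (fun i ↦ f i x) l (𝓝 (g x))) (hR : Tendsto R l (𝓝 r))
    (hfR : ∀ᶠ i in l, ∫⁻ x, f i x ∂μ ≤ R i) : ∫⁻ x, g x ∂μ ≤ r := by
  classical
  let f' : ι → α → ENNReal := fun i ↦ if AEMeasurable (f i) μ then f i else fun _ ↦ 0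
  have hf' : ∀ i, AEMeasurable (f' i) μ := fun i ↦ by
    by_cases h : AEMeasurable (f i) μ
    · simpa only [f', if_pos h]
    · simpa only [f', if_neg h] using aemeasurable_zero
  have hff' : ∀ᶠ i in l, f i = f' i := hf.mono fun _ h ↦ (if_pos h).symm
  calc ∫⁻ x, g x ∂μ = ∫⁻ x, liminf (fun i ↦ f' i x) l ∂μ :=
        lintegral_congr_ae <| hfg.mono fun x hx ↦
          (hx.congr' (hff'.mono fun _ h ↦ congrFun h x)).liminf_eq.symm
    _ ≤ liminf (fun i ↦ ∫⁻ x, f' i x ∂μ) l := lintegral_liminf_le' hf'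
    _ ≤ liminf R l := liminf_le_liminf <| (hfR.and hff').mono fun _ h ↦ h.2 ▸ h.1
    _ = r := hR.liminf_eq

theorem tendsto_measure_setOf_le_zero {α : Type*} [MeasurableSpace α] {μ : Measure α}
    [IsFiniteMeasure μ] {b : ℕ → α → ℝ} {v : α → ℝ} {t : ℝ} (hb : ∀ k, Measurable (b k))
    (hbv : ∀ᵐ x ∂μ, Tendsto (fun k ↦ b k x) atTop (𝓝 (v x))) (hv : ∀ᵐ x ∂μ, t < v x) :
    Tendsto (fun k ↦ μ {x | b k x ≤ t}) atTop (𝓝 0) := by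
  rw [← measure_empty (μ := μ)]
  refine tendsto_measure_of_ae_tendsto_indicator_of_isFiniteMeasure atTop MeasurableSet.empty
    (fun k ↦ measurableSet_le (hb k) measurable_const) ?_
  filter_upwards [hbv, hv] with x hx hvx
  filter_upwards [hx.eventually_const_lt hvx] with k hk
  exact iff_of_false (not_le.2 hk) (Set.notMem_empty x)

theorem ae_restrict_comp_add_right {G : Type*} [AddGroup G] [MeasurableSpace G] [MeasurableAdd G]
    {μ : Measure G} [μ.IsAddRightInvariant] {K K' : Set G} {P : G → Prop} {y : G}
    (hK : MeasurableSet K) (hK' : MeasurableSet K') (hKK' : ∀ x ∈ K, x + y ∈ K')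
    (hP : ∀ᵐ x ∂μ.restrict K', P x) : ∀ᵐ x ∂μ.restrict K, P (x + y) := by
  rw [ae_restrict_iff' hK'] at hP
  filter_upwards [ae_restrict_of_ae
      ((measurePreserving_add_right μ y).quasiMeasurePreserving.ae hP), ae_restrict_mem hK]
    with x hx hxK using hx (hKK' x hxK)

end AlmostEverywhere

section StepRatioLimit

variable {F : Type*} [NormedAddCommGroup F] [InnerProductSpace ℝ F] [CompleteSpace F]
  [MeasurableSpace F] [BorelSpace F] {μ : Measure F} {K' : Set F}
  {v : F → ℝ} {δ c p : ℝ}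

theorem measurable_stepError {g : F → ℝ} (hg : ContDiff ℝ 1 g) : Measurable (stepError δ c g) :=
  ((continuous_gradient hg).measurable.norm.const_mul c).ennreal_ofReal.indicator
    (isClosed_le hg.continuous continuous_const).measurableSet

theorem lintegral_stepError_rpow_le {g : F → ℝ} (hp : 1 ≤ p) (hδ : 0 ≤ δ) (hc : 0 ≤ c)
    (hg : ContDiff ℝ 1 g) (hg₀ : ∀ x, 0 ≤ g x) :
    (∫⁻ x in K', stepError δ c g x ∂μ) ^ p ≤ (μ.restrict K' {x | g x ≤ 2 * δ}) ^ (p - 1) *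
      (ENNReal.ofReal (c ^ p * (1 + (2 * δ) ^ p)) *
        ∫⁻ x in K', ENNReal.ofReal (‖gradient g x‖ ^ p / (1 + g x ^ p)) ∂μ) := by
  set A := {x | g x ≤ 2 * δ}
  have hA : MeasurableSet A := (isClosed_le hg.continuous continuous_const).measurableSet
  have hgrad : Measurable fun x ↦ ENNReal.ofReal (c * ‖gradient g x‖) :=
    ((continuous_gradient hg).measurable.norm.const_mul c).ennreal_ofReal
  have hpt : ∀ x ∈ A, ENNReal.ofReal (c * ‖gradient g x‖) ^ p ≤
      ENNReal.ofReal (c ^ p * (1 + (2 * δ) ^ p)) *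
        ENNReal.ofReal (‖gradient g x‖ ^ p / (1 + g x ^ p)) := fun x hx ↦ by
    have hgx := hg₀ x
    have hgδ : g x ^ p ≤ (2 * δ) ^ p := Real.rpow_le_rpow hgx hx (by linarith)
    rw [ENNReal.ofReal_rpow_of_nonneg (by positivity) (by linarith),
      ← ENNReal.ofReal_mul (by positivity), Real.mul_rpow hc (norm_nonneg _), mul_assoc]
    gcongr
    rw [mul_div_assoc', le_div_iff₀ (by positivity), mul_comm]
    gcongr
  calc (∫⁻ x in K', stepError δ c g x ∂μ) ^ p
      = (∫⁻ x in A, ENNReal.ofReal (c * ‖gradient g x‖) ∂μ.restrict K') ^ p := by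
        rw [← lintegral_indicator hA]
        rfl
    _ ≤ μ.restrict K' A ^ (p - 1) *
          ∫⁻ x in A, ENNReal.ofReal (c * ‖gradient g x‖) ^ p ∂μ.restrict K' := by
        refine (lintegral_rpow_le_measure_univ_rpow_mul hp hgrad.aemeasurable).trans_eq ?_
        rw [Measure.restrict_apply_univ]
    _ ≤ _ := by
        gcongr
        rw [← lintegral_const_mul' _ _ ENNReal.ofReal_ne_top]
        exact (setLIntegral_mono' hA hpt).trans (setLIntegral_le_lintegral _ _)

variable {b : ℕ → F → ℝ} {G : ENNReal}

theorem tendsto_lintegral_stepError (hp : 1 < p) (hδ : 0 ≤ δ) (hc : 0 ≤ c)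
    (hK' : MeasurableSet K') (hμK' : μ K' ≠ ⊤) (hb : ∀ k, ContDiff ℝ 1 (b k))
    (hb₀ : ∀ k x, 0 ≤ b k x)
    (hbv : ∀ᵐ x ∂μ.restrict K', Tendsto (fun k ↦ b k x) atTop (𝓝 (v x)))
    (hv : ∀ x ∈ K', 2 * δ < v x) (hG : G ≠ ⊤)
    (hbG : ∀ k, ∫⁻ x in K', ENNReal.ofReal (‖gradient (b k) x‖ ^ p / (1 + b k x ^ p)) ∂μ ≤ G) :
    Tendsto (fun k ↦ ∫⁻ x in K', stepError δ c (b k) x ∂μ) atTop (𝓝 0) := by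
  have hp₀ : 0 < p := by linarith
  set M := ENNReal.ofReal (c ^ p * (1 + (2 * δ) ^ p)) * G
  have hM : M ≠ ⊤ := ENNReal.mul_ne_top ENNReal.ofReal_ne_top hG
  have : IsFiniteMeasure (μ.restrict K') := isFiniteMeasure_restrict.2 hμK'
  have hbad := tendsto_measure_setOf_le_zero (fun k ↦ (hb k).continuous.measurable) hbv
    ((ae_restrict_mem hK').mono hv)
  have hpow : Tendsto (fun k ↦ (∫⁻ x in K', stepError δ c (b k) x ∂μ) ^ p) atTop (𝓝 0) := by
    have hlim := ENNReal.Tendsto.mul_const (hbad.ennrpow_const (p - 1)) (Or.inr hM)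
    rw [ENNReal.zero_rpow_of_pos (sub_pos.2 hp), zero_mul] at hlim
    refine tendsto_of_tendsto_of_tendsto_of_le_of_le tendsto_const_nhds hlim (fun _ ↦ zero_le)
      fun k ↦ (lintegral_stepError_rpow_le hp.le hδ hc (hb k) (hb₀ k)).trans ?_
    exact mul_le_mul_right (mul_le_mul_right (hbG k) _) _
  have hroot := hpow.ennrpow_const p⁻¹
  rw [ENNReal.zero_rpow_of_pos (inv_pos.2 hp₀)] at hroot
  simpa only [ENNReal.rpow_rpow_inv hp₀.ne'] using hroot

variable [SecondCountableTopology F]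

theorem measurable_logDeficit {f g : F → ℝ} (hf : ContDiff ℝ 1 f) (hg : ContDiff ℝ 1 g) :
    Measurable (logDeficit p f g) := by
  have hf₀ := hf.continuous.measurable
  have hg₀ := hg.continuous.measurable
  have hf₁ := (continuous_gradient hf).measurable
  have hg₁ := (continuous_gradient hg).measurable
  unfold logDeficit logGrad
  fun_prop

variable {a : ℕ → F → ℝ} {α : F → ℝ} {K : Set F} {e : F} {τ : ℝ} {χ : ℝ → ℝ}

variable [SFinite μ] [μ.IsAddRightInvariant]

theorem lintegral_enorm_stepRatio_sub_rpow_le {f g : F → ℝ} (hχ : IsSmoothStep δ c χ) (hδ : 0 < δ)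
    (hp : 1 ≤ p) (hK : MeasurableSet K) (hK' : MeasurableSet K') (he : ‖e‖ ≤ 1) (hτ : 0 ≤ τ)
    (hKK' : ∀ x ∈ K, ∀ t ∈ Set.Icc 0 τ, x + t • e ∈ K') (hf : ContDiff ℝ 1 f)
    (hg : ContDiff ℝ 1 g) (hf₀ : ∀ x, 0 ≤ f x) (hg₀ : ∀ x, 0 ≤ g x) (hfK' : ∀ x ∈ K', 0 < f x)
    (hgK' : ∀ x ∈ K', 0 < g x) :
    ∫⁻ x in K, ‖stepRatio χ f g (x + τ • e) - stepRatio χ f g x‖ₑ ^ p ∂μ ≤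
      2 ^ (p - 1) * (ENNReal.ofReal τ ^ p *
        (ENNReal.ofReal (δ⁻¹ ^ p) * ∫⁻ x in K', ENNReal.ofReal (logDeficit p f g x) ∂μ) +
          ENNReal.ofReal τ * ∫⁻ x in K', stepError δ c g x ∂μ) := by
  have hp₀ : 0 < p := by linarith
  have hS : ∀ x y, ‖stepRatio χ f g y - stepRatio χ f g x‖ₑ ≤ 1 := fun x y ↦ by
    rw [← ofReal_norm, ← ENNReal.ofReal_one]
    exact ENNReal.ofReal_le_ofReal (Real.dist_le_of_mem_Icc_01
      (stepRatio_mem_Icc hχ (hf₀ y) (hg₀ y)) (stepRatio_mem_Icc hχ (hf₀ x) (hg₀ x)))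
  have hlog : ∀ x, 0 ≤ logDeficit p f g x := fun x ↦ by
    have := hf₀ x
    have := hg₀ x
    unfold logDeficit
    positivity
  have h := lintegral_enorm_sub_rpow_le (μ := μ) hp (contDiff_stepRatio hχ hδ hf hg hf₀) hS hτ hK
    hK' hKK' (((measurable_logDeficit hf hg).pow_const p⁻¹).const_mul δ⁻¹).ennreal_ofReal
    (measurable_stepError hg) fun y hy ↦ enorm_fderiv_stepRatio_apply_le hχ hδ hp
      (hf.differentiable one_ne_zero y) (hg.differentiable one_ne_zero y) (hfK' y hy) (hgK' y hy) he
  rw [ENNReal.one_rpow, one_mul] at h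
  rw [← lintegral_const_mul' _ _ ENNReal.ofReal_ne_top]
  convert h using 7 with x
  rw [ENNReal.ofReal_rpow_of_nonneg (by have := hlog x; positivity) hp₀.le,
    Real.mul_rpow (by positivity) (Real.rpow_nonneg (hlog x) _), Real.rpow_inv_rpow (hlog x)
      hp₀.ne', ENNReal.ofReal_mul (by positivity)]

theorem lintegral_enorm_div_add_sub_rpow_le (hp : 1 < p) (hK : MeasurableSet K)
    (hK' : MeasurableSet K') (hμK' : μ K' ≠ ⊤) (he : ‖e‖ ≤ 1) (hτ : 0 ≤ τ)
    (hKK' : ∀ x ∈ K, ∀ t ∈ Set.Icc 0 τ, x + t • e ∈ K') (ha : ∀ k, ContDiff ℝ 1 (a k))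
    (hb : ∀ k, ContDiff ℝ 1 (b k)) (ha₀ : ∀ k x, 0 ≤ a k x) (hb₀ : ∀ k x, 0 ≤ b k x)
    (haK' : ∀ k, ∀ x ∈ K', 0 < a k x) (hbK' : ∀ k, ∀ x ∈ K', 0 < b k x)
    (haα : ∀ x, Tendsto (fun k ↦ a k x) atTop (𝓝 (α x)))
    (hbv : ∀ᵐ x ∂μ.restrict K', Tendsto (fun k ↦ b k x) atTop (𝓝 (v x))) (hδ : 0 < δ)
    (hv : ∀ x ∈ K', 2 * δ < v x) (hG : G ≠ ⊤)
    (hbG : ∀ k, ∫⁻ x in K', ENNReal.ofReal (‖gradient (b k) x‖ ^ p / (1 + b k x ^ p)) ∂μ ≤ G)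
    {R : ℕ → ENNReal} {r : ENNReal} (hR : Tendsto R atTop (𝓝 r))
    (habR : ∀ k, ∫⁻ x in K', ENNReal.ofReal (logDeficit p (a k) (b k) x) ∂μ ≤ R k) :
    ∫⁻ x in K, ‖α (x + τ • e) / (α (x + τ • e) + v (x + τ • e)) - α x / (α x + v x)‖ₑ ^ p ∂μ ≤
      2 ^ (p - 1) * (ENNReal.ofReal τ ^ p * (ENNReal.ofReal (δ⁻¹ ^ p) * r)) := by
  have hp₀ : 0 < p := by linarith
  obtain ⟨χ, c, hχ⟩ := exists_isSmoothStep hδ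
  have hc : 0 ≤ c := (abs_nonneg _).trans (hχ.abs_deriv_le 0)
  have hT : ∀ k, Measurable (stepRatio χ (a k) (b k)) := fun k ↦
    (contDiff_stepRatio hχ hδ (ha k) (hb k) (ha₀ k)).continuous.measurable
  have hlim : ∀ x ∈ K', Tendsto (fun k ↦ b k x) atTop (𝓝 (v x)) →
      Tendsto (fun k ↦ stepRatio χ (a k) (b k) x) atTop (𝓝 (α x / (α x + v x))) := fun x hx hbx ↦
    tendsto_stepRatio hχ hδ (ge_of_tendsto' (haα x) fun k ↦ ha₀ k x) (hv x hx) (haα x) hbx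
  have hbound : Tendsto (fun k ↦ (2 : ENNReal) ^ (p - 1) * (ENNReal.ofReal τ ^ p *
      (ENNReal.ofReal (δ⁻¹ ^ p) * R k) + ENNReal.ofReal τ * ∫⁻ x in K', stepError δ c (b k) x ∂μ))
      atTop (𝓝 (2 ^ (p - 1) * (ENNReal.ofReal τ ^ p * (ENNReal.ofReal (δ⁻¹ ^ p) * r)))) := by
    have herr := tendsto_lintegral_stepError hp hδ.le hc hK' hμK' hb hb₀ hbv hv hG hbG
    have hτp : ENNReal.ofReal τ ^ p ≠ ⊤ :=
      ENNReal.rpow_ne_top_of_nonneg hp₀.le ENNReal.ofReal_ne_top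
    have h2 : (2 : ENNReal) ^ (p - 1) ≠ ⊤ :=
      ENNReal.rpow_ne_top_of_nonneg (sub_nonneg.2 hp.le) (by simp)
    simpa only [mul_zero, add_zero] using ENNReal.Tendsto.const_mul
      ((ENNReal.Tendsto.const_mul (ENNReal.Tendsto.const_mul hR (Or.inr ENNReal.ofReal_ne_top))
        (Or.inr hτp)).add (ENNReal.Tendsto.const_mul herr (Or.inr ENNReal.ofReal_ne_top)))
          (Or.inr h2)
  refine lintegral_le_of_tendsto_ae (f := fun k x ↦
      ‖stepRatio χ (a k) (b k) (x + τ • e) - stepRatio χ (a k) (b k) x‖ₑ ^ p)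
    (Eventually.of_forall fun k ↦ ?_) ?_ hbound (Eventually.of_forall fun k ↦ ?_)
  · have := hT k
    fun_prop
  · have hT_lim := (ae_restrict_mem hK').and hbv |>.mono fun x hx ↦ hlim x hx.1 hx.2
    have hKsub : K ⊆ K' := fun x hx ↦ by simpa using hKK' x hx 0 ⟨le_rfl, hτ⟩
    filter_upwards [ae_restrict_of_ae_restrict_of_subset hKsub hT_lim,
      ae_restrict_comp_add_right hK hK' (fun x hx ↦ hKK' x hx τ ⟨hτ, le_rfl⟩) hT_lim] with x hx hxe
    exact ((hxe.sub hx).enorm).ennrpow_const p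
  · refine (lintegral_enorm_stepRatio_sub_rpow_le hχ hδ hp.le hK hK' he hτ hKK' (ha k) (hb k)
      (ha₀ k) (hb₀ k) (haK' k) (hbK' k)).trans ?_
    gcongr
    exact habR k

end StepRatioLimit

section Regularization

variable {d : ℕ} {Ω K : Set (Euc d)} {V φ φ₀ u w : Euc d → ℝ} {p κ C C₁ ε η : ℝ}

/-- A `C¹` function that approximates `|u|` uniformly up to `η` and is positive on `K`. -/
structure IsAbsApprox (K : Set (Euc d)) (η : ℝ) (u a : Euc d → ℝ) : Prop where
  contDiff : ContDiff ℝ 1 a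
  nonneg : ∀ x, 0 ≤ a x
  pos : ∀ x ∈ K, 0 < a x
  abs_sub_le : ∀ x, |(a x - |u x|)| ≤ η

theorem isAbsApprox_regAbs (hε : ε ∈ Set.Ioo 0 η) (hφ : ∀ x, φ x ∈ Set.Icc (0 : ℝ) 1)
    (hφs : ContDiff ℝ (⊤ : ℕ∞) φ) (hus : ContDiff ℝ (⊤ : ℕ∞) u)
    (hu : tsupport u ⊆ Function.support φ) (hK : K ⊆ Function.support φ) :
    IsAbsApprox K η u (regAbs ε φ u) := by
  have h := isAdapted_regAbs hε.1 (fun x ↦ (hφ x).1) hφs hus hu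
  refine ⟨h.contDiff.of_le (by simp), h.nonneg, fun x hx ↦ h.pos x (hK hx), fun x ↦ ?_⟩
  have hle := regAbs_le (u := u) hε.1.le (fun x ↦ (hφ x).1) x
  have hεφ := mul_le_of_le_one_right hε.1.le (hφ x).2
  rw [abs_of_nonneg (sub_nonneg.2 (abs_le_regAbs x))]
  linarith [hε.2]

theorem gradient_eq_zero_of_eventually_eq_one {x : Euc d} (hφ : ∀ᶠ y in 𝓝 x, φ y = 1) :
    gradient φ x = 0 := by
  rw [EventuallyEq.gradient_eq (f := fun _ ↦ 1) hφ, gradient_fun_const]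

theorem norm_gradient_regAbs_le_of_eventually_eq_one (hε : 0 < ε) (hφ : ∀ x, 0 ≤ φ x)
    (hφs : Differentiable ℝ φ) (hus : Differentiable ℝ u) (hu : tsupport u ⊆ Function.support φ)
    {x : Euc d} (hx : ∀ᶠ y in 𝓝 x, φ y = 1) : ‖gradient (regAbs ε φ u) x‖ ≤ ‖gradient u x‖ := by
  simpa only [gradient_eq_zero_of_eventually_eq_one hx, norm_zero, mul_zero, add_zero] using
    norm_gradient_regAbs_le hε hφ hφs hus hu x

theorem exists_regAbs_of_finite (hΩ : IsOpen Ω) (hp : 0 < p) (hV : LocBddPotential Ω V)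
    (hK : IsCompact K) (hKΩ : K ⊆ Ω) {S : Set (Euc d → ℝ)} (hS : S.Finite)
    (hSΩ : ∀ f ∈ S, IsTestFun Ω f) (hη : 0 < η) :
    ∃ φ, ∃ ε ∈ Set.Ioo 0 η, IsTestFun Ω φ ∧ (∀ x, φ x ∈ Set.Icc (0 : ℝ) 1) ∧
      (∀ᶠ x in 𝓝ˢ K, φ x = 1) ∧ ∀ f ∈ S, tsupport f ⊆ Function.support φ ∧
        energyQ Ω V p (regAbs ε φ f) ≤ energyQ Ω V p f + η := by
  obtain ⟨φ, hφt, hφ, hφ₁⟩ := exists_isTestFun_eq_one (L := K ∪ ⋃ f ∈ S, tsupport f) hΩ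
    (hK.union (hS.isCompact_biUnion fun f hf ↦ (hSΩ f hf).2.1))
    (Set.union_subset hKΩ (Set.iUnion₂_subset fun f hf ↦ (hSΩ f hf).2.2))
  rw [nhdsSet_union, eventually_sup] at hφ₁
  have hsupp : ∀ f ∈ S, tsupport f ⊆ Function.support φ := fun f hf x hx ↦ by
    rw [Function.mem_support, hφ₁.2.self_of_nhdsSet x (Set.mem_biUnion hf hx)]
    exact one_ne_zero
  have henergy : ∀ᶠ ε in 𝓝[>] 0, ∀ f ∈ S,
      energyQ Ω V p (regAbs ε φ f) ≤ energyQ Ω V p f + η :=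
    (eventually_all_finite hS).2 fun f hf ↦
      eventually_energyQ_regAbs_le hp hV hφt (fun x ↦ (hφ x).1) (hSΩ f hf) (hsupp f hf) hη
  obtain ⟨ε, hε, hεη⟩ := (henergy.and (Ioo_mem_nhdsGT hη)).exists
  exact ⟨φ, ε, hεη, hφt, hφ, hφ₁.1, fun f hf ↦ ⟨hsupp f hf, hε f hf⟩⟩

theorem exists_isAbsApprox_and_lintegral_le (hΩ : IsOpen Ω) (hp : 1 ≤ p)
    (hV : LocBddPotential Ω V) (hQ : ∀ u, IsTestFun Ω u → 0 ≤ energyQ Ω V p u)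
    (hgap : IsGapBound (Euc d) p κ C) (hC : 0 ≤ C) (hκ : 0 ≤ κ)
    (hgap₁ : IsGapBound (Euc d) p 1 C₁) (hC₁ : 0 ≤ C₁) (hK : IsCompact K) (hKΩ : K ⊆ Ω)
    (hφ₀ : IsTestFun Ω φ₀) (hφ₀K : ∀ᶠ x in 𝓝ˢ K, φ₀ x = 1) (hu : IsTestFun Ω u)
    (hw : IsTestFun Ω w) (hη : 0 < η) :
    ∃ a b, IsAbsApprox K η u a ∧ IsAbsApprox K η w b ∧
      ∫⁻ x in K, ENNReal.ofReal (‖gradient b x‖ ^ p / (1 + b x ^ p)) ≤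
        ENNReal.ofReal C₁ * ENNReal.ofReal (energyQ Ω V p φ₀ + η + (energyQ Ω V p w + η)) ∧
      ∫⁻ x in K, ENNReal.ofReal (logDeficit p a b x) ≤
        ENNReal.ofReal C * ENNReal.ofReal (energyQ Ω V p u + η + (energyQ Ω V p w + η)) +
          ENNReal.ofReal κ * ∫⁻ x in K, ENNReal.ofReal (‖gradient u x‖ ^ p) := by
  have hp₀ : 0 < p := by linarith
  obtain ⟨φ, ε, hε, hφt, hφ, hφK, hS⟩ := exists_regAbs_of_finite (S := {u, w, φ₀}) hΩ hp₀ hV hK hKΩ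
    (by simp) (by simp [hu, hw, hφ₀]) hη
  simp only [Set.forall_mem_insert, Set.mem_singleton_iff, forall_eq] at hS
  obtain ⟨⟨hsu, hQu⟩, ⟨hsw, hQw⟩, hsφ₀, hQφ₀⟩ := hS
  have hφnn := fun x ↦ (hφ x).1
  have hsK : K ⊆ Function.support φ := fun x hx ↦ by simp [hφK.self_of_nhdsSet x hx]
  have hu' := isAdapted_regAbs hε.1 hφnn hφt.1 hu.1 hsu
  have hw' := isAdapted_regAbs hε.1 hφnn hφt.1 hw.1 hsw
  have hφ₀' := isAdapted_regAbs hε.1 hφnn hφt.1 hφ₀.1 hsφ₀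
  have hgrad : ∀ {f}, IsTestFun Ω f → tsupport f ⊆ Function.support φ → ∀ x ∈ K,
      ‖gradient (regAbs ε φ f) x‖ ≤ ‖gradient f x‖ := fun hf hsf x hx ↦
    norm_gradient_regAbs_le_of_eventually_eq_one hε.1 hφnn hφt.differentiableAt
      hf.differentiableAt hsf (hφK.filter_mono (nhds_le_nhdsSet hx))
  refine ⟨regAbs ε φ u, regAbs ε φ w, isAbsApprox_regAbs hε hφ hφt.1 hu.1 hsu hsK,
    isAbsApprox_regAbs hε hφ hφt.1 hw.1 hsw hsK, ?_, ?_⟩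
  · refine (lintegral_norm_gradient_rpow_div_le hp hV hQ hgap₁ hC₁ zero_le_one hφnn hφt hφ₀' hw'
      hK.measurableSet hKΩ hsK (fun x hx ↦ ?_) fun x hx ↦ ?_).trans (by gcongr)
    · simpa only [hφ₀K.self_of_nhdsSet x hx, abs_one] using
        abs_le_regAbs (ε := ε) (φ := φ) (u := φ₀) x
    · rw [← norm_le_zero_iff]
      refine (hgrad hφ₀ hsφ₀ x hx).trans_eq ?_
      rw [gradient_eq_zero_of_eventually_eq_one (hφ₀K.filter_mono (nhds_le_nhdsSet hx)), norm_zero]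
  · refine (lintegral_logDeficit_le hp hV hQ hgap hC hκ hφnn hφt hu' hw'
      hK.measurableSet hKΩ hsK).trans ?_
    gcongr _ * ENNReal.ofReal ?_ + _ * ?_
    · linarith
    · refine setLIntegral_mono' hK.measurableSet fun x hx ↦ ENNReal.ofReal_le_ofReal ?_
      exact Real.rpow_le_rpow (norm_nonneg _) (hgrad hu hsu x hx) hp₀.le

end Regularization

section NullSequence

theorem exists_seq_tendsto_ae_of_tendsto_integral_rpow {α : Type*} [MeasurableSpace α]
    {μ : Measure α} {p : ℝ} (hp : 0 < p) {f : ℕ → α → ℝ} {g : α → ℝ}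
    (hf : ∀ k, AEStronglyMeasurable (f k) μ) (hg : AEStronglyMeasurable g μ)
    (hint : ∀ k, Integrable (fun x ↦ |f k x - g x| ^ p) μ)
    (hlim : Tendsto (fun k ↦ ∫ x, |f k x - g x| ^ p ∂μ) atTop (𝓝 0)) :
    ∃ n : ℕ → ℕ, StrictMono n ∧ ∀ᵐ x ∂μ, Tendsto (fun k ↦ f (n k) x) atTop (𝓝 (g x)) := by
  have hp' : ENNReal.ofReal p ≠ 0 := by simpa using hp
  have hnorm : ∀ k, eLpNorm (f k - g) (ENNReal.ofReal p) μ =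
      ENNReal.ofReal (∫ x, |f k x - g x| ^ p ∂μ) ^ p⁻¹ := fun k ↦ by
    rw [eLpNorm_eq_lintegral_rpow_enorm_toReal hp' ENNReal.ofReal_ne_top,
      ENNReal.toReal_ofReal hp.le, one_div, ofReal_integral_eq_lintegral_ofReal (hint k)
        (Eventually.of_forall fun x ↦ by positivity)]
    simp only [Pi.sub_apply, Real.enorm_eq_ofReal_abs,
      ENNReal.ofReal_rpow_of_nonneg (abs_nonneg _) hp.le]
  refine (tendstoInMeasure_of_tendsto_eLpNorm hp' hf hg ?_).exists_seq_tendsto_ae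
  have h := (ENNReal.tendsto_ofReal hlim).ennrpow_const p⁻¹
  rw [ENNReal.ofReal_zero, ENNReal.zero_rpow_of_pos (inv_pos.2 hp)] at h
  simpa only [hnorm] using h

variable {d : ℕ} {Ω K K' : Set (Euc d)} {V u v : Euc d → ℝ} {w : ℕ → Euc d → ℝ}
  {p κ C δ τ : ℝ} {e : Euc d}

theorem IsGroundState.exists_seq_tendsto_ae (hp : 0 < p) (hv : IsGroundState Ω V p v)
    (hK : IsCompact K) (hKΩ : K ⊆ Ω) :
    ∃ w : ℕ → Euc d → ℝ, (∀ k, IsTestFun Ω (w k)) ∧ (∀ k x, 0 ≤ w k x) ∧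
      Tendsto (fun k ↦ energyQ Ω V p (w k)) atTop (𝓝 0) ∧
      ∀ᵐ x ∂volume.restrict K, Tendsto (fun k ↦ w k x) atTop (𝓝 (v x)) := by
  obtain ⟨hvC, -, w, ⟨hwt, hw₀, -, -, -, -, -, hwQ⟩, hwlim⟩ := hv
  have hvK := hvC.continuousOn.mono hKΩ
  obtain ⟨n, hn, hae⟩ := exists_seq_tendsto_ae_of_tendsto_integral_rpow (μ := volume.restrict K) hp
    (fun k ↦ (hwt k).1.continuous.aestronglyMeasurable) (hvK.aestronglyMeasurable hK.measurableSet)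
    (fun k ↦ (((hwt k).1.continuous.continuousOn.sub hvK).abs.rpow_const
      fun _ _ ↦ Or.inr hp.le).integrableOn_compact hK) (hwlim K hKΩ hK)
  exact ⟨fun k ↦ w (n k), fun k ↦ hwt _, fun k ↦ hw₀ _, hwQ.comp hn.tendsto_atTop, hae⟩

theorem lintegral_enorm_abs_div_add_sub_rpow_le (hΩ : IsOpen Ω) (hp : 1 < p)
    (hV : LocBddPotential Ω V) (hQ : ∀ u, IsTestFun Ω u → 0 ≤ energyQ Ω V p u)
    (hgap : IsGapBound (Euc d) p κ C) (hC : 0 ≤ C) (hκ : 0 ≤ κ) (hK : MeasurableSet K)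
    (hK' : IsCompact K') (hK'Ω : K' ⊆ Ω) (he : ‖e‖ ≤ 1) (hτ : 0 ≤ τ)
    (hKK' : ∀ x ∈ K, ∀ t ∈ Set.Icc 0 τ, x + t • e ∈ K') (hw : ∀ k, IsTestFun Ω (w k))
    (hw₀ : ∀ k x, 0 ≤ w k x) (hwQ : Tendsto (fun k ↦ energyQ Ω V p (w k)) atTop (𝓝 0))
    (hwv : ∀ᵐ x ∂volume.restrict K', Tendsto (fun k ↦ w k x) atTop (𝓝 (v x))) (hδ : 0 < δ)
    (hv : ∀ x ∈ K', 2 * δ < v x) (hu : IsTestFun Ω u) :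
    ∫⁻ x in K, ‖|u (x + τ • e)| / (|u (x + τ • e)| + v (x + τ • e)) -
        |u x| / (|u x| + v x)‖ₑ ^ p ≤
      2 ^ (p - 1) * (ENNReal.ofReal τ ^ p * (ENNReal.ofReal (δ⁻¹ ^ p) *
        (ENNReal.ofReal C * ENNReal.ofReal (energyQ Ω V p u) +
          ENNReal.ofReal κ * ∫⁻ x in K', ENNReal.ofReal (‖gradient u x‖ ^ p)))) := by
  obtain ⟨C₁, hC₁, hgap₁⟩ := exists_isGapBound (E := Euc d) hp one_pos
  obtain ⟨φ₀, hφ₀, -, hφ₀K'⟩ := exists_isTestFun_eq_one hΩ hK' hK'Ω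
  let η : ℕ → ℝ := fun k ↦ 1 / (k + 1)
  have hη : ∀ k, 0 < η k := fun k ↦ Nat.one_div_pos_of_nat
  have hη₀ : Tendsto η atTop (𝓝 0) := tendsto_one_div_add_atTop_nhds_zero_nat
  choose a b ha hb hG hD using fun k ↦ exists_isAbsApprox_and_lintegral_le hΩ hp.le hV hQ hgap hC
    hκ hgap₁ hC₁.le hK' hK'Ω hφ₀ hφ₀K' hu (hw k) (hη k)
  have hsum : ∀ q : ℝ, Tendsto (fun k ↦ q + η k + (energyQ Ω V p (w k) + η k)) atTop (𝓝 q) :=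
    fun q ↦ by simpa using (tendsto_const_nhds.add hη₀).add (hwQ.add hη₀)
  obtain ⟨M, hM⟩ := (hsum (energyQ Ω V p φ₀)).bddAbove_range
  refine lintegral_enorm_div_add_sub_rpow_le (α := fun x ↦ |u x|) hp hK hK'.measurableSet
    hK'.measure_lt_top.ne he hτ hKK' (fun k ↦ (ha k).contDiff) (fun k ↦ (hb k).contDiff)
    (fun k ↦ (ha k).nonneg) (fun k ↦ (hb k).nonneg) (fun k ↦ (ha k).pos) (fun k ↦ (hb k).pos)
    (fun x ↦ ?_) (hwv.mono fun x hx ↦ ?_) hδ hv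
    (ENNReal.mul_ne_top ENNReal.ofReal_ne_top ENNReal.ofReal_ne_top)
    (fun k ↦ (hG k).trans (mul_le_mul_right (ENNReal.ofReal_le_ofReal (hM ⟨k, rfl⟩)) _)) ?_ hD
  · exact tendsto_iff_dist_tendsto_zero.2
      (squeeze_zero (fun _ ↦ dist_nonneg) (fun k ↦ (ha k).abs_sub_le x) hη₀)
  · have hbw : ∀ k, ‖b k x - w k x‖ ≤ η k := fun k ↦ by
      simpa only [abs_of_nonneg (hw₀ k x), Real.norm_eq_abs] using (hb k).abs_sub_le x
    simpa using (squeeze_zero_norm hbw hη₀).add hx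
  · exact (ENNReal.Tendsto.const_mul (ENNReal.tendsto_ofReal (hsum _))
      (Or.inr ENNReal.ofReal_ne_top)).add tendsto_const_nhds

end NullSequence

section DifferenceQuotient

theorem aemeasurable_enorm_comp_add_sub {G : Type*} [NormedAddCommGroup G] [MeasurableSpace G]
    [BorelSpace G] {μ : Measure G} {K K' : Set G} {q : G → ℝ} {y : G} (hq : ContinuousOn q K')
    (hK : MeasurableSet K) (hKK' : K ⊆ K') (hy : ∀ x ∈ K, x + y ∈ K') :
    AEMeasurable (fun x ↦ ‖q (x + y) - q x‖ₑ) (μ.restrict K) :=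
  (((hq.comp (continuous_id.add continuous_const).continuousOn hy).sub
    (hq.mono hKK')).aemeasurable hK).enorm

theorem tendsto_mul_div_add_mul {α v : ℝ} (hv : v ≠ 0) :
    Tendsto (fun s : ℝ ↦ s * (α / (α + s * v))) atTop (𝓝 (α / v)) := by
  have h : Tendsto (fun s : ℝ ↦ α / (α * s⁻¹ + v)) atTop (𝓝 (α / (α * 0 + v))) :=
    tendsto_const_nhds.div ((tendsto_inv_atTop_zero.const_mul α).add_const v) (by simpa)
  rw [mul_zero, zero_add] at h
  refine h.congr' ((eventually_ne_atTop 0).mono fun s hs ↦ ?_)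
  beta_reduce
  rw [show α + s * v = s * (α * s⁻¹ + v) by field_simp, mul_div_assoc', mul_div_mul_left _ _ hs]

variable {d : ℕ} {Ω K K' : Set (Euc d)} {V u v : Euc d → ℝ} {w : ℕ → Euc d → ℝ}
  {p κ C δ τ : ℝ} {e : Euc d}

theorem lintegral_enorm_mul_abs_div_add_sub_rpow_le (hΩ : IsOpen Ω) (hp : 1 < p)
    (hV : LocBddPotential Ω V) (hQ : ∀ u, IsTestFun Ω u → 0 ≤ energyQ Ω V p u)
    (hgap : IsGapBound (Euc d) p κ C) (hC : 0 ≤ C) (hκ : 0 ≤ κ) (hK : MeasurableSet K)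
    (hK' : IsCompact K') (hK'Ω : K' ⊆ Ω) (he : ‖e‖ ≤ 1) (hτ : 0 ≤ τ)
    (hKK' : ∀ x ∈ K, ∀ t ∈ Set.Icc 0 τ, x + t • e ∈ K') (hgs : IsGroundState Ω V p v)
    (hδ : 0 < δ) (hv : ∀ x ∈ K', 2 * δ < v x) (hu : IsTestFun Ω u) {s : ℝ} (hs : 0 < s) :
    ∫⁻ x in K, ‖s * (|u (x + τ • e)| / (|u (x + τ • e)| + s * v (x + τ • e))) -
        s * (|u x| / (|u x| + s * v x))‖ₑ ^ p ≤
      2 ^ (p - 1) * (ENNReal.ofReal τ ^ p * (ENNReal.ofReal (δ⁻¹ ^ p) *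
        (ENNReal.ofReal C * ENNReal.ofReal (energyQ Ω V p u) +
          ENNReal.ofReal κ * ∫⁻ x in K', ENNReal.ofReal (‖gradient u x‖ ^ p)))) := by
  have hp₀ : 0 < p := by linarith
  obtain ⟨w, hw, hw₀, hwQ, hwv⟩ := hgs.exists_seq_tendsto_ae hp₀ hK' hK'Ω
  have hswQ : Tendsto (fun k ↦ energyQ Ω V p fun x ↦ s * w k x) atTop (𝓝 0) := by
    simpa only [fun k ↦ (hw k).energyQ_const_mul (V := V) (p := p) hs.le, mul_zero] using
      hwQ.const_mul (s ^ p)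
  have h := lintegral_enorm_abs_div_add_sub_rpow_le (v := fun x ↦ s * v x) hΩ hp hV hQ hgap hC hκ
    hK hK' hK'Ω he hτ hKK' (fun k ↦ (hw k).const_mul s) (fun k x ↦ mul_nonneg hs.le (hw₀ k x))
    hswQ (hwv.mono fun x hx ↦ hx.const_mul s) (mul_pos hs hδ)
    (fun x hx ↦ by nlinarith [hv x hx]) hu
  have hscale : ENNReal.ofReal s ^ p * ENNReal.ofReal ((s * δ)⁻¹ ^ p) =
      ENNReal.ofReal (δ⁻¹ ^ p) := by
    rw [ENNReal.ofReal_rpow_of_pos hs, ← ENNReal.ofReal_mul (by positivity),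
      ← Real.mul_rpow hs.le (by positivity), mul_inv, mul_inv_cancel_left₀ hs.ne']
  simp only [← mul_sub, enorm_mul, ENNReal.mul_rpow_of_nonneg _ _ hp₀.le,
    Real.enorm_of_nonneg hs.le]
  rw [lintegral_const_mul' _ _ (ENNReal.rpow_ne_top_of_nonneg hp₀.le ENNReal.ofReal_ne_top),
    ← hscale]
  exact (mul_le_mul_right h _).trans_eq (by ring)

theorem lintegral_enorm_abs_div_sub_rpow_le (hΩ : IsOpen Ω) (hp : 1 < p)
    (hV : LocBddPotential Ω V) (hQ : ∀ u, IsTestFun Ω u → 0 ≤ energyQ Ω V p u)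
    (hgap : IsGapBound (Euc d) p κ C) (hC : 0 ≤ C) (hκ : 0 ≤ κ) (hK : MeasurableSet K)
    (hK' : IsCompact K') (hK'Ω : K' ⊆ Ω) (he : ‖e‖ ≤ 1) (hτ : 0 ≤ τ)
    (hKK' : ∀ x ∈ K, ∀ t ∈ Set.Icc 0 τ, x + t • e ∈ K') (hgs : IsGroundState Ω V p v)
    (hδ : 0 < δ) (hv : ∀ x ∈ K', 2 * δ < v x) (hu : IsTestFun Ω u) :
    ∫⁻ x in K, ‖|u (x + τ • e)| / v (x + τ • e) - |u x| / v x‖ₑ ^ p ≤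
      2 ^ (p - 1) * (ENNReal.ofReal τ ^ p * (ENNReal.ofReal (δ⁻¹ ^ p) *
        (ENNReal.ofReal C * ENNReal.ofReal (energyQ Ω V p u) +
          ENNReal.ofReal κ * ∫⁻ x in K', ENNReal.ofReal (‖gradient u x‖ ^ p)))) := by
  have hK₀ : K ⊆ K' := fun x hx ↦ by simpa using hKK' x hx 0 ⟨le_rfl, hτ⟩
  have hKτ : ∀ x ∈ K, x + τ • e ∈ K' := fun x hx ↦ hKK' x hx τ ⟨hτ, le_rfl⟩
  have hvK' := hgs.1.continuousOn.mono hK'Ω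
  have huc := hu.1.continuous.abs.continuousOn (s := K')
  refine lintegral_le_of_tendsto_ae (l := atTop) ?_ ((ae_restrict_mem hK).mono fun x hx ↦ ?_)
    tendsto_const_nhds ((eventually_gt_atTop 0).mono fun s hs ↦
      lintegral_enorm_mul_abs_div_add_sub_rpow_le hΩ hp hV hQ hgap hC hκ hK hK' hK'Ω he hτ hKK' hgs
        hδ hv hu hs)
  · filter_upwards [eventually_gt_atTop 0] with s hs
    refine (aemeasurable_enorm_comp_add_sub (q := fun x ↦ s * (|u x| / (|u x| + s * v x)))
      (continuousOn_const.mul (huc.div (huc.add (continuousOn_const.mul hvK')) fun x hx ↦ ?_))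
      hK hK₀ hKτ).pow_const p
    have := hgs.2.1 x (hK'Ω hx)
    positivity
  · exact ((tendsto_mul_div_add_mul (hgs.2.1 _ (hK'Ω (hKτ x hx))).ne').sub
      (tendsto_mul_div_add_mul (hgs.2.1 _ (hK'Ω (hK₀ hx))).ne')).enorm.ennrpow_const p

end DifferenceQuotient

section DirectionalDerivative

theorem tendsto_enorm_inv_mul_abs_sub_abs {E : Type*} [NormedAddCommGroup E] [NormedSpace ℝ E]
    {f : E → ℝ} {L : E →L[ℝ] ℝ} {x : E} (hf : HasFDerivAt f L x) (e : E) :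
    Tendsto (fun τ : ℝ ↦ ‖τ⁻¹ * (|f (x + τ • e)| - |f x|)‖ₑ) (𝓝[≠] 0) (𝓝 ‖L e‖ₑ) := by
  refine (hf.hasLineDerivAt e).tendsto_slope_zero.enorm.congr' ?_
  have hsign : ∀ᶠ τ : ℝ in 𝓝[≠] 0, 0 ≤ f (x + τ • e) * f x := by
    rcases eq_or_ne (f x) 0 with h | h
    · simp [h]
    · have hcont : ContinuousAt (fun τ : ℝ ↦ f (x + τ • e) * f x) 0 := by
        refine ContinuousAt.mul ?_ continuousAt_const
        refine ContinuousAt.comp (g := f) ?_ (by fun_prop)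
        simpa using hf.continuousAt
      have hpos : 0 < f (x + (0 : ℝ) • e) * f x := by simpa using mul_self_pos.2 h
      exact nhdsWithin_le_nhds ((hcont.eventually_const_lt hpos).mono fun _ ↦ le_of_lt)
  filter_upwards [hsign] with τ hτ
  have habs : |f (x + τ • e) - f x| = |(|f (x + τ • e)| - |f x|)| := by
    rw [← sq_eq_sq_iff_abs_eq_abs, sub_sq, sub_sq, sq_abs, sq_abs, mul_assoc, mul_assoc, ← abs_mul,
      abs_of_nonneg hτ]
  rw [smul_eq_mul, enorm_mul, enorm_mul, Real.enorm_eq_ofReal_abs (f _ - _), habs,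
    ← Real.enorm_eq_ofReal_abs]

theorem tendsto_lintegral_cthickening {α : Type*} [PseudoEMetricSpace α] [MeasurableSpace α]
    [OpensMeasurableSpace α] {μ : Measure α} {K : Set α} (hK : IsClosed K) {f : α → ENNReal}
    (hf : ∫⁻ x, f x ∂μ ≠ ⊤) :
    Tendsto (fun τ : ℝ ↦ ∫⁻ x in Metric.cthickening τ K, f x ∂μ) (𝓝 0)
      (𝓝 (∫⁻ x in K, f x ∂μ)) := by
  have hmeas : ∀ s, IsClosed s → μ.withDensity f s = ∫⁻ x in s, f x ∂μ := fun s hs ↦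
    withDensity_apply f hs.measurableSet
  have h := tendsto_measure_cthickening (μ := μ.withDensity f) (s := K) ⟨1, one_pos, by
    rw [hmeas _ Metric.isClosed_cthickening]
    exact ne_top_of_le_ne_top hf (setLIntegral_le_lintegral _ _)⟩
  simpa only [hK.closure_eq, hmeas K hK, hmeas _ Metric.isClosed_cthickening] using h

theorem add_smul_mem_cthickening {E : Type*} [SeminormedAddCommGroup E] [NormedSpace ℝ E]
    {K : Set E} {x e : E} {t τ : ℝ} (hx : x ∈ K) (he : ‖e‖ ≤ 1) (ht : t ∈ Set.Icc 0 τ) :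
    x + t • e ∈ Metric.cthickening τ K := by
  refine Metric.mem_cthickening_of_dist_le _ x _ _ hx ?_
  rw [dist_self_add_left, norm_smul, Real.norm_of_nonneg ht.1]
  exact (mul_le_of_le_one_right ht.1 he).trans ht.2

theorem lintegral_enorm_inv_mul_rpow {α : Type*} [MeasurableSpace α] {μ : Measure α} {p τ : ℝ}
    (hp : 0 ≤ p) (hτ : 0 < τ) (f : α → ℝ) :
    ∫⁻ x, ‖τ⁻¹ * f x‖ₑ ^ p ∂μ = (ENNReal.ofReal τ ^ p)⁻¹ * ∫⁻ x, ‖f x‖ₑ ^ p ∂μ := by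
  have hτp : (ENNReal.ofReal τ ^ p)⁻¹ = ‖τ⁻¹‖ₑ ^ p := by
    rw [← ENNReal.inv_rpow, ← ENNReal.ofReal_inv_of_pos hτ,
      Real.enorm_of_nonneg (inv_nonneg.2 hτ.le)]
  rw [hτp, ← lintegral_const_mul' _ _ (ENNReal.rpow_ne_top_of_nonneg hp enorm_ne_top)]
  simp only [enorm_mul, ENNReal.mul_rpow_of_nonneg _ _ hp]

variable {d : ℕ} {Ω K : Set (Euc d)} {V u v : Euc d → ℝ} {p κ C δ r : ℝ} {e : Euc d}

theorem lintegral_enorm_fderiv_div_apply_rpow_le (hΩ : IsOpen Ω) (hp : 1 < p)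
    (hV : LocBddPotential Ω V) (hQ : ∀ u, IsTestFun Ω u → 0 ≤ energyQ Ω V p u)
    (hgap : IsGapBound (Euc d) p κ C) (hC : 0 ≤ C) (hκ : 0 ≤ κ) (hK : IsCompact K) (hr : 0 < r)
    (hrΩ : Metric.cthickening r K ⊆ Ω) (he : ‖e‖ ≤ 1) (hgs : IsGroundState Ω V p v) (hδ : 0 < δ)
    (hv : ∀ x ∈ Metric.cthickening r K, 2 * δ < v x) (hu : IsTestFun Ω u) :
    ∫⁻ x in K, ‖fderiv ℝ (fun y ↦ u y / v y) x e‖ₑ ^ p ≤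
      2 ^ (p - 1) * (ENNReal.ofReal (δ⁻¹ ^ p) *
        (ENNReal.ofReal C * ENNReal.ofReal (energyQ Ω V p u) +
          ENNReal.ofReal κ * ∫⁻ x in K, ENNReal.ofReal (‖gradient u x‖ ^ p))) := by
  have hp₀ : 0 < p := one_pos.trans hp
  have hK₀ := Metric.self_subset_cthickening K (δ := r)
  have hτr : ∀ᶠ τ : ℝ in 𝓝[>] 0, τ ∈ Set.Ioc 0 r := Ioc_mem_nhdsGT hr
  have hsub {τ : ℝ} (hτ : τ ∈ Set.Ioc 0 r) := Metric.cthickening_mono hτ.2 K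
  have hmem {τ : ℝ} (hτ : τ ∈ Set.Ioc 0 r) (x) (hx : x ∈ K) : x + τ • e ∈ Metric.cthickening r K :=
    hsub hτ (add_smul_mem_cthickening hx he ⟨hτ.1.le, le_rfl⟩)
  have habs : ∀ x ∈ Ω, |u x / v x| = |u x| / v x := fun x hx ↦ by
    rw [abs_div, abs_of_pos (hgs.2.1 x hx)]
  have hlim := (tendsto_lintegral_cthickening hK.isClosed
    (hu.integrable_gradient_rpow hp₀).lintegral_lt_top.ne).mono_left
    (nhdsWithin_le_nhds (s := Set.Ioi 0))
  refine lintegral_le_of_tendsto_ae (l := 𝓝[>] 0)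
    (f := fun τ x ↦ ‖τ⁻¹ * (|u (x + τ • e)| / v (x + τ • e) - |u x| / v x)‖ₑ ^ p)
    (hτr.mono fun τ hτ ↦ ?_) ((ae_restrict_mem hK.measurableSet).mono fun x hx ↦ ?_)
    (ENNReal.Tendsto.const_mul (ENNReal.Tendsto.const_mul (tendsto_const_nhds.add
      (ENNReal.Tendsto.const_mul hlim (Or.inr ENNReal.ofReal_ne_top)))
      (Or.inr ENNReal.ofReal_ne_top))
      (Or.inr (ENNReal.rpow_ne_top_of_nonneg (by linarith) ENNReal.ofNat_ne_top)))
    (hτr.mono fun τ hτ ↦ ?_)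
  · simp only [enorm_mul]
    exact ((aemeasurable_enorm_comp_add_sub (hu.1.continuous.abs.continuousOn.div
      (hgs.1.continuousOn.mono hrΩ) fun x hx ↦ (hgs.2.1 x (hrΩ hx)).ne') hK.measurableSet hK₀
      (hmem hτ)).const_mul _).pow_const p
  · have hxΩ := hrΩ (hK₀ hx)
    have hvx := (hgs.1.differentiableOn one_ne_zero).differentiableAt (hΩ.mem_nhds hxΩ)
    have hquot := differentiableAt_div (hu.differentiableAt x) hvx (hgs.2.1 x hxΩ).ne'
    refine (((tendsto_enorm_inv_mul_abs_sub_abs hquot.hasFDerivAt e).mono_left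
      (nhdsWithin_mono 0 fun _ ↦ ne_of_gt)).congr' (hτr.mono fun τ hτ ↦ ?_)).ennrpow_const p
    rw [habs x hxΩ, habs _ (hrΩ (hmem hτ x hx))]
  · rw [lintegral_enorm_inv_mul_rpow hp₀.le hτ.1, ← ENNReal.div_eq_inv_mul]
    refine ENNReal.div_le_of_le_mul' ((lintegral_enorm_abs_div_sub_rpow_le hΩ hp hV hQ hgap hC hκ
      hK.measurableSet hK.cthickening ((hsub hτ).trans hrΩ) he hτ.1.le
      (fun x hx t ht ↦ add_smul_mem_cthickening hx he ht) hgs hδ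
      (fun x hx ↦ hv x (hsub hτ hx)) hu).trans_eq (by ring))

theorem exists_forall_lintegral_enorm_fderiv_div_apply_rpow_le (hΩ : IsOpen Ω) (hp : 1 < p)
    (hV : LocBddPotential Ω V) (hQ : ∀ u, IsTestFun Ω u → 0 ≤ energyQ Ω V p u)
    (hgs : IsGroundState Ω V p v) (hK : IsCompact K) (hKΩ : K ⊆ Ω) :
    ∃ c : ENNReal, c ≠ ⊤ ∧ ∀ κ C, 0 ≤ κ → 0 ≤ C → IsGapBound (Euc d) p κ C →
      ∀ u, IsTestFun Ω u → ∀ e : Euc d, ‖e‖ ≤ 1 →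
        ∫⁻ x in K, ‖fderiv ℝ (fun y ↦ u y / v y) x e‖ₑ ^ p ≤
          c * (ENNReal.ofReal C * ENNReal.ofReal (energyQ Ω V p u) +
            ENNReal.ofReal κ * ∫⁻ x in K, ENNReal.ofReal (‖gradient u x‖ ^ p)) := by
  obtain ⟨r, hr, hrΩ⟩ := hK.exists_cthickening_subset_open hΩ hKΩ
  obtain ⟨m, hm, hmv⟩ := hK.cthickening.exists_forall_le' (hgs.1.continuousOn.mono hrΩ) (a := 0)
    fun x hx ↦ hgs.2.1 x (hrΩ hx)
  have hv : ∀ x ∈ Metric.cthickening r K, 2 * (m / 4) < v x := fun x hx ↦ by linarith [hmv x hx]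
  refine ⟨2 ^ (p - 1) * ENNReal.ofReal ((m / 4)⁻¹ ^ p), ENNReal.mul_ne_top
    (ENNReal.rpow_ne_top_of_nonneg (by linarith) ENNReal.ofNat_ne_top) ENNReal.ofReal_ne_top,
    fun κ C hκ hC hgap u hu e he ↦ ?_⟩
  rw [mul_assoc]
  exact lintegral_enorm_fderiv_div_apply_rpow_le hΩ hp hV hQ hgap hC hκ hK hr hrΩ he hgs
    (by positivity) hv hu

end DirectionalDerivative

section GradientEstimate

theorem le_two_mul_of_le_add_inv_two_mul {a b : ENNReal} (ha : a ≠ ⊤) (h : a ≤ b + 2⁻¹ * a) :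
    a ≤ 2 * b := by
  have hhalf : 2⁻¹ * a + 2⁻¹ * a = a := by rw [← add_mul, ENNReal.inv_two_add_inv_two, one_mul]
  have hle : 2⁻¹ * a ≤ b :=
    (ENNReal.add_le_add_iff_right (a := 2⁻¹ * a) (by finiteness)).1 (hhalf.trans_le h)
  rw [two_mul, ← hhalf]
  exact add_le_add hle hle

theorem norm_le_sum_norm_apply_orthonormalBasis {ι E F : Type*} [Fintype ι]
    [NormedAddCommGroup E] [InnerProductSpace ℝ E] [NormedAddCommGroup F] [NormedSpace ℝ F]
    (b : OrthonormalBasis ι ℝ E) (L : E →L[ℝ] F) : ‖L‖ ≤ ∑ i, ‖L (b i)‖ := by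
  refine L.opNorm_le_bound (Finset.sum_nonneg fun i _ ↦ norm_nonneg _) fun x ↦ ?_
  conv_lhs => rw [← b.sum_repr x, map_sum]
  rw [Finset.sum_mul]
  refine (norm_sum_le _ _).trans (Finset.sum_le_sum fun i _ ↦ ?_)
  rw [map_smul, norm_smul, mul_comm]
  gcongr
  simpa using PiLp.norm_apply_le (b.repr x) i

theorem lintegral_enorm_fderiv_rpow_le_sum {ι E : Type*} [Fintype ι] [NormedAddCommGroup E]
    [InnerProductSpace ℝ E] [CompleteSpace E] [MeasurableSpace E] [BorelSpace E] {μ : Measure E}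
    (b : OrthonormalBasis ι ℝ E) {p : ℝ} (hp : 1 ≤ p) (f : E → ℝ) :
    ∫⁻ x, ‖fderiv ℝ f x‖ₑ ^ p ∂μ ≤
      (Fintype.card ι : ENNReal) ^ (p - 1) * ∑ i, ∫⁻ x, ‖fderiv ℝ f x (b i)‖ₑ ^ p ∂μ := by
  have hmeas : ∀ i, Measurable fun x ↦ ‖fderiv ℝ f x (b i)‖ₑ ^ p := fun i ↦
    (measurable_fderiv_apply_const ℝ f _).enorm.pow_const p
  rw [← lintegral_finsetSum _ fun i _ ↦ hmeas i,
    ← lintegral_const_mul _ (Finset.measurable_sum _ fun i _ ↦ hmeas i)]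
  refine lintegral_mono fun x ↦ ?_
  have hle : ‖fderiv ℝ f x‖ₑ ≤ ∑ i, ‖fderiv ℝ f x (b i)‖ₑ := by
    simp only [← ofReal_norm, ← ENNReal.ofReal_sum_of_nonneg fun _ _ ↦ norm_nonneg _]
    exact ENNReal.ofReal_le_ofReal (norm_le_sum_norm_apply_orthonormalBasis b _)
  exact (ENNReal.rpow_le_rpow hle (by linarith)).trans
    (ENNReal.rpow_sum_le_const_mul_sum_rpow Finset.univ _ hp)

theorem lintegral_enorm_rpow_ne_top_of_isCompact {α E : Type*} [TopologicalSpace α]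
    [MeasurableSpace α] [OpensMeasurableSpace α] [T2Space α] {μ : Measure α}
    [IsFiniteMeasureOnCompacts μ] [NormedAddCommGroup E] {K : Set α} (hK : IsCompact K) {f : α → E}
    (hf : ContinuousOn f K) {p : ℝ} (hp : 0 ≤ p) : ∫⁻ x in K, ‖f x‖ₑ ^ p ∂μ ≠ ⊤ := by
  have h := ((hf.norm.rpow_const fun _ _ ↦ Or.inr hp).integrableOn_compact hK
    (μ := μ)).lintegral_lt_top.ne
  simpa only [← ENNReal.ofReal_rpow_of_nonneg (norm_nonneg _) hp, ofReal_norm] using h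

theorem enorm_fderiv_le_of_div {E : Type*} [NormedAddCommGroup E] [NormedSpace ℝ E] {f g : E → ℝ}
    {x : E} (hf : DifferentiableAt ℝ f x) (hg : DifferentiableAt ℝ g x) (hgx : g x ≠ 0) :
    ‖fderiv ℝ f x‖ₑ ≤
      ‖g x‖ₑ * ‖fderiv ℝ (fun y ↦ f y / g y) x‖ₑ + ‖fderiv ℝ g x‖ₑ * ‖f x / g x‖ₑ := by
  have hfg : f =ᶠ[𝓝 x] fun y ↦ g y * (f y / g y) :=
    (hg.continuousAt.eventually_ne hgx).mono fun y hy ↦ (mul_div_cancel₀ _ hy).symm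
  rw [hfg.fderiv_eq, (hg.hasFDerivAt.fun_mul (differentiableAt_div hf hg hgx).hasFDerivAt).fderiv,
    mul_comm ‖fderiv ℝ g x‖ₑ, ← enorm_smul, ← enorm_smul]
  exact enorm_add_le (E := E →L[ℝ] ℝ) _ _

variable {d : ℕ} {Ω K : Set (Euc d)} {V v : Euc d → ℝ} {p : ℝ} {ε : ENNReal}

theorem exists_forall_lintegral_gradient_rpow_le (hΩ : IsOpen Ω) (hv : ContDiffOn ℝ 1 v Ω)
    (hv₀ : ∀ x ∈ Ω, v x ≠ 0) (hK : IsCompact K) (hKΩ : K ⊆ Ω) (hp : 1 ≤ p) :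
    ∃ N : ENNReal, N ≠ ⊤ ∧ ∀ u : Euc d → ℝ, Differentiable ℝ u →
      ∫⁻ x in K, ENNReal.ofReal (‖gradient u x‖ ^ p) ≤
        N * ((∫⁻ x in K, ‖fderiv ℝ (fun y ↦ u y / v y) x‖ₑ ^ p) +
          ∫⁻ x in K, ‖u x / v x‖ₑ ^ p) := by
  have hp₀ : 0 ≤ p := by linarith
  obtain ⟨M₁, hM₁⟩ := hK.exists_bound_of_continuousOn (hv.continuousOn.mono hKΩ)
  obtain ⟨M₂, hM₂⟩ := hK.exists_bound_of_continuousOn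
    ((hv.continuousOn_fderiv_of_isOpen hΩ le_rfl).mono hKΩ)
  let M : ENNReal := ENNReal.ofReal (max M₁ M₂)
  refine ⟨M ^ p * 2 ^ (p - 1), by finiteness, fun u hu ↦ ?_⟩
  rw [← lintegral_add_left (by fun_prop), ← lintegral_const_mul' _ _ (by finiteness)]
  refine setLIntegral_mono' hK.measurableSet fun x hx ↦ ?_
  have hvx := (hv.differentiableOn one_ne_zero).differentiableAt (hΩ.mem_nhds (hKΩ hx))
  have hM : ‖v x‖ₑ ≤ M ∧ ‖fderiv ℝ v x‖ₑ ≤ M := by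
    simp only [← ofReal_norm]
    exact ⟨ENNReal.ofReal_le_ofReal ((hM₁ x hx).trans (le_max_left _ _)),
      ENNReal.ofReal_le_ofReal ((hM₂ x hx).trans (le_max_right _ _))⟩
  calc ENNReal.ofReal (‖gradient u x‖ ^ p) = ‖fderiv ℝ u x‖ₑ ^ p := by
        rw [norm_gradient, ← ENNReal.ofReal_rpow_of_nonneg (norm_nonneg _) hp₀, ofReal_norm]
    _ ≤ (M * (‖fderiv ℝ (fun y ↦ u y / v y) x‖ₑ + ‖u x / v x‖ₑ)) ^ p := by
        refine ENNReal.rpow_le_rpow ?_ hp₀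
        rw [mul_add]
        refine (enorm_fderiv_le_of_div (hu x) hvx (hv₀ x (hKΩ hx))).trans ?_
        gcongr
        exacts [hM.1, hM.2]
    _ ≤ M ^ p * (2 ^ (p - 1) *
          (‖fderiv ℝ (fun y ↦ u y / v y) x‖ₑ ^ p + ‖u x / v x‖ₑ ^ p)) := by
        rw [ENNReal.mul_rpow_of_nonneg _ _ hp₀]
        gcongr
        exact ENNReal.rpow_add_le_mul_rpow_add_rpow _ _ hp
    _ = _ := (mul_assoc _ _ _).symm

theorem IsTestFun.contDiffOn_div {u : Euc d → ℝ} (hu : IsTestFun Ω u) (hv : ContDiffOn ℝ 1 v Ω)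
    (hv₀ : ∀ x ∈ Ω, v x ≠ 0) : ContDiffOn ℝ 1 (fun x ↦ u x / v x) Ω :=
  (hu.1.of_le (mod_cast le_top)).contDiffOn.div hv hv₀

theorem exists_forall_lintegral_enorm_fderiv_div_rpow_le_gradient (hΩ : IsOpen Ω) (hp : 1 < p)
    (hV : LocBddPotential Ω V) (hQ : ∀ u, IsTestFun Ω u → 0 ≤ energyQ Ω V p u)
    (hgs : IsGroundState Ω V p v) (hK : IsCompact K) (hKΩ : K ⊆ Ω) :
    ∃ A : ENNReal, A ≠ ⊤ ∧ ∀ κ C, 0 ≤ κ → 0 ≤ C → IsGapBound (Euc d) p κ C →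
      ∀ u, IsTestFun Ω u → ∫⁻ x in K, ‖fderiv ℝ (fun y ↦ u y / v y) x‖ₑ ^ p ≤
        A * (ENNReal.ofReal C * ENNReal.ofReal (energyQ Ω V p u) +
          ENNReal.ofReal κ * ∫⁻ x in K, ENNReal.ofReal (‖gradient u x‖ ^ p)) := by
  obtain ⟨c, hc, hest⟩ :=
    exists_forall_lintegral_enorm_fderiv_div_apply_rpow_le hΩ hp hV hQ hgs hK hKΩ
  have hp₁ : 0 ≤ p - 1 := by linarith
  refine ⟨(d : ENNReal) ^ (p - 1) * (d * c), by finiteness, fun κ C hκ hC hgap u hu ↦ ?_⟩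
  let b := EuclideanSpace.basisFun (Fin d) ℝ
  calc ∫⁻ x in K, ‖fderiv ℝ (fun y ↦ u y / v y) x‖ₑ ^ p
      ≤ (d : ENNReal) ^ (p - 1) * ∑ i, ∫⁻ x in K, ‖fderiv ℝ (fun y ↦ u y / v y) x (b i)‖ₑ ^ p := by
        simpa using lintegral_enorm_fderiv_rpow_le_sum b hp.le fun y ↦ u y / v y
    _ ≤ (d : ENNReal) ^ (p - 1) * ∑ _i : Fin d, c * (ENNReal.ofReal C *
          ENNReal.ofReal (energyQ Ω V p u) + ENNReal.ofReal κ *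
            ∫⁻ x in K, ENNReal.ofReal (‖gradient u x‖ ^ p)) := by
        gcongr with i
        exact hest κ C hκ hC hgap u hu (b i) (b.norm_eq_one i).le
    _ = _ := by
        rw [Finset.sum_const, Finset.card_univ, Fintype.card_fin, nsmul_eq_mul]
        ring

theorem exists_forall_lintegral_enorm_fderiv_div_rpow_le (hΩ : IsOpen Ω) (hp : 1 < p)
    (hV : LocBddPotential Ω V) (hQ : ∀ u, IsTestFun Ω u → 0 ≤ energyQ Ω V p u)
    (hgs : IsGroundState Ω V p v) (hK : IsCompact K) (hKΩ : K ⊆ Ω) (hε : ε ≠ 0) :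
    ∃ C : ENNReal, C ≠ ⊤ ∧ ∀ u, IsTestFun Ω u →
      ∫⁻ x in K, ‖fderiv ℝ (fun y ↦ u y / v y) x‖ₑ ^ p ≤
        C * ENNReal.ofReal (energyQ Ω V p u) + ε * ∫⁻ x in K, ‖u x / v x‖ₑ ^ p := by
  have hv₀ : ∀ x ∈ Ω, v x ≠ 0 := fun x hx ↦ (hgs.2.1 x hx).ne'
  obtain ⟨A, hA, hquot⟩ :=
    exists_forall_lintegral_enorm_fderiv_div_rpow_le_gradient hΩ hp hV hQ hgs hK hKΩ
  obtain ⟨N, hN, hgrad⟩ := exists_forall_lintegral_gradient_rpow_le hΩ hgs.1 hv₀ hK hKΩ hp.le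
  obtain ⟨κ, hκ, hκε⟩ := ENNReal.exists_nnreal_pos_mul_lt (ENNReal.mul_ne_top hA hN)
    (b := 2⁻¹ * min 1 ε) (by simp [hε])
  obtain ⟨C, hC, hgap⟩ := exists_isGapBound (E := Euc d) hp (NNReal.coe_pos.2 hκ)
  refine ⟨2 * (A * ENNReal.ofReal C), by finiteness, fun u hu ↦ ?_⟩
  let X := ∫⁻ x in K, ‖fderiv ℝ (fun y ↦ u y / v y) x‖ₑ ^ p
  let Y := ∫⁻ x in K, ‖u x / v x‖ₑ ^ p
  have hX : X ≠ ⊤ := lintegral_enorm_rpow_ne_top_of_isCompact hK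
    (((hu.contDiffOn_div hgs.1 hv₀).continuousOn_fderiv_of_isOpen hΩ le_rfl).mono hKΩ) (by linarith)
  suffices h : X ≤ A * ENNReal.ofReal C * ENNReal.ofReal (energyQ Ω V p u) + 2⁻¹ * ε * Y +
      2⁻¹ * X by
    refine (le_two_mul_of_le_add_inv_two_mul hX h).trans_eq ?_
    rw [mul_add, ← mul_assoc 2 (2⁻¹ * ε), ENNReal.mul_inv_cancel_left (by simp) (by simp),
      ← mul_assoc]
  calc X ≤ A * (ENNReal.ofReal C * ENNReal.ofReal (energyQ Ω V p u) + κ * (N * (X + Y))) := by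
        refine (hquot κ C κ.2 hC.le hgap u hu).trans ?_
        rw [ENNReal.ofReal_coe_nnreal]
        gcongr
        exact hgrad u fun x ↦ hu.differentiableAt x
    _ = A * ENNReal.ofReal C * ENNReal.ofReal (energyQ Ω V p u) + κ * (A * N) * Y +
          κ * (A * N) * X := by ring
    _ ≤ _ := by
        have hκε' : κ * (A * N) ≤ 2⁻¹ * ε := hκε.le.trans (by gcongr; exact min_le_right _ _)
        have hκ₁ : κ * (A * N) ≤ 2⁻¹ :=
          hκε.le.trans (mul_le_of_le_one_right zero_le (min_le_left _ _))
        gcongr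

end GradientEstimate

section RadialPoincare

variable {E : Type*} [NormedAddCommGroup E] [NormedSpace ℝ E] {x₀ : E} {R θ p : ℝ}

theorem add_smul_sub_mem_closedBall {x : E} (hx : x ∈ Metric.closedBall x₀ R) {t : ℝ}
    (ht : 0 ≤ t) : x₀ + t • (x - x₀) ∈ Metric.closedBall x₀ (t * R) := by
  rw [mem_closedBall_iff_norm, add_sub_cancel_left, norm_smul, Real.norm_of_nonneg ht]
  exact mul_le_mul_of_nonneg_left (mem_closedBall_iff_norm.1 hx) ht

theorem add_smul_sub_mem_closedBall_self {x : E} (hx : x ∈ Metric.closedBall x₀ R)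
    {t : ℝ} (ht : t ∈ Set.Icc 0 1) : x₀ + t • (x - x₀) ∈ Metric.closedBall x₀ R :=
  Metric.closedBall_subset_closedBall
    (mul_le_of_le_one_left (dist_nonneg.trans (Metric.mem_closedBall.1 hx)) ht.2)
    (add_smul_sub_mem_closedBall hx ht.1)

variable [MeasurableSpace E] [BorelSpace E]

section Homothety

variable [FiniteDimensional ℝ E] {μ : Measure E} [μ.IsAddHaarMeasure]

theorem lintegral_comp_add_smul_sub (g : E → ENNReal) (x₀ : E) {t : ℝ} (ht : t ≠ 0) :
    ∫⁻ x, g (x₀ + t • (x - x₀)) ∂μ =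
      ENNReal.ofReal |(t ^ Module.finrank ℝ E)⁻¹| * ∫⁻ x, g x ∂μ := by
  calc ∫⁻ x, g (x₀ + t • (x - x₀)) ∂μ
      = ∫⁻ x, g (x₀ + t • x) ∂μ := lintegral_sub_right_eq_self (fun x ↦ g (x₀ + t • x)) x₀
    _ = ∫⁻ y, g (x₀ + y) ∂μ.map (t • ·) :=
        (lintegral_map_equiv (fun y ↦ g (x₀ + y))
          (Homeomorph.smulOfNeZero t ht).toMeasurableEquiv).symm
    _ = ENNReal.ofReal |(t ^ Module.finrank ℝ E)⁻¹| * ∫⁻ x, g x ∂μ := by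
        rw [Measure.map_addHaar_smul μ ht, lintegral_smul_measure, smul_eq_mul,
          lintegral_add_left_eq_self g x₀]

theorem setLIntegral_comp_add_smul_sub_le {K K' : Set E} (hK : MeasurableSet K)
    (hK' : MeasurableSet K') {t : ℝ} (hθ : 0 < θ) (ht : θ ≤ t)
    (hKK' : ∀ x ∈ K, x₀ + t • (x - x₀) ∈ K') (g : E → ENNReal) :
    ∫⁻ x in K, g (x₀ + t • (x - x₀)) ∂μ ≤
      ENNReal.ofReal (θ ^ Module.finrank ℝ E)⁻¹ * ∫⁻ x in K', g x ∂μ := by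
  have ht₀ : 0 < t := hθ.trans_le ht
  rw [← lintegral_indicator hK, ← lintegral_indicator hK']
  calc ∫⁻ x, K.indicator (fun x ↦ g (x₀ + t • (x - x₀))) x ∂μ
      ≤ ∫⁻ x, K'.indicator g (x₀ + t • (x - x₀)) ∂μ :=
        lintegral_mono fun x ↦ Set.indicator_apply_le' (fun hx ↦ by
          rw [Set.indicator_of_mem (hKK' x hx)]) fun _ ↦ zero_le
    _ = ENNReal.ofReal |(t ^ Module.finrank ℝ E)⁻¹| * ∫⁻ x, K'.indicator g x ∂μ :=
        lintegral_comp_add_smul_sub _ x₀ ht₀.ne'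
    _ ≤ _ := by
        rw [abs_of_pos (by positivity)]
        gcongr

theorem lintegral_lintegral_comp_add_smul_sub_le {K : Set E} (hK : MeasurableSet K) (hθ : 0 < θ)
    (hKθ : ∀ x ∈ K, ∀ t ∈ Set.Icc θ 1, x₀ + t • (x - x₀) ∈ K) {g : E → ENNReal}
    (hg : Measurable g) :
    ∫⁻ x in K, (∫⁻ t in Set.Icc θ 1, g (x₀ + t • (x - x₀))) ∂μ ≤
      ENNReal.ofReal (θ ^ Module.finrank ℝ E)⁻¹ * ∫⁻ x in K, g x ∂μ := by
  have hmeas : Measurable fun q : E × ℝ ↦ g (x₀ + q.2 • (q.1 - x₀)) := hg.comp (by fun_prop)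
  rw [lintegral_lintegral_swap hmeas.aemeasurable]
  calc ∫⁻ t in Set.Icc θ 1, (∫⁻ x in K, g (x₀ + t • (x - x₀)) ∂μ)
      ≤ ∫⁻ _ in Set.Icc θ 1, ENNReal.ofReal (θ ^ Module.finrank ℝ E)⁻¹ * ∫⁻ x in K, g x ∂μ :=
        setLIntegral_mono' measurableSet_Icc fun t ht ↦
          setLIntegral_comp_add_smul_sub_le hK hK hθ ht.1 (fun x hx ↦ hKθ x hx t ht) g
    _ ≤ _ := by
        rw [setLIntegral_const, Real.volume_Icc]
        exact mul_le_of_le_one_right zero_le (ENNReal.ofReal_le_one.2 (by linarith))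

end Homothety

variable {G : Type*} [NormedAddCommGroup G] [NormedSpace ℝ G] {Ω : Set E} {ω : E → G}

theorem enorm_rpow_le_radial [CompleteSpace G] (hp : 1 ≤ p) (hΩ : IsOpen Ω)
    (hω : ContDiffOn ℝ 1 ω Ω) (hball : Metric.closedBall x₀ R ⊆ Ω) (hθ : θ ∈ Set.Icc 0 1)
    {x : E} (hx : x ∈ Metric.closedBall x₀ R) :
    ‖ω x‖ₑ ^ p ≤ 2 ^ (p - 1) *
      (ENNReal.ofReal R ^ p * (∫⁻ t in Set.Icc θ 1, ‖fderiv ℝ ω (x₀ + t • (x - x₀))‖ₑ ^ p) +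
        ‖ω (x₀ + θ • (x - x₀))‖ₑ ^ p) := by
  have hp₀ : 0 ≤ p := by linarith
  let I := ∫⁻ t in Set.Icc θ 1, ‖fderiv ℝ ω (x₀ + t • (x - x₀))‖ₑ
  have hmeas : Measurable fun t : ℝ ↦ ‖fderiv ℝ ω (x₀ + t • (x - x₀))‖ₑ :=
    (measurable_fderiv ℝ ω).enorm.comp (by fun_prop)
  have hFTC : ‖ω x - ω (x₀ + θ • (x - x₀))‖ₑ ≤ ENNReal.ofReal R * I := by
    have h := enorm_sub_le_lintegral_fderiv hΩ hω hθ.2 fun t ht ↦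
      hball (add_smul_sub_mem_closedBall_self hx ⟨hθ.1.trans ht.1, ht.2⟩)
    rw [one_smul, add_sub_cancel] at h
    rw [← lintegral_const_mul' _ _ ENNReal.ofReal_ne_top]
    refine h.trans (lintegral_mono fun t ↦ ?_)
    rw [mul_comm]
    refine ((fderiv ℝ ω _).le_opENorm _).trans (mul_le_mul_right ?_ _)
    rw [← ofReal_norm]
    exact ENNReal.ofReal_le_ofReal (mem_closedBall_iff_norm.1 hx)
  have hJensen : I ^ p ≤ ∫⁻ t in Set.Icc θ 1, ‖fderiv ℝ ω (x₀ + t • (x - x₀))‖ₑ ^ p := by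
    refine (lintegral_rpow_le_measure_univ_rpow_mul hp hmeas.aemeasurable).trans ?_
    refine mul_le_of_le_one_left zero_le (ENNReal.rpow_le_one ?_ (by linarith))
    rw [Measure.restrict_apply_univ, Real.volume_Icc]
    exact ENNReal.ofReal_le_one.2 (by linarith [hθ.1])
  calc ‖ω x‖ₑ ^ p ≤ (ENNReal.ofReal R * I + ‖ω (x₀ + θ • (x - x₀))‖ₑ) ^ p := by
        gcongr
        calc ‖ω x‖ₑ = ‖(ω x - ω (x₀ + θ • (x - x₀))) + ω (x₀ + θ • (x - x₀))‖ₑ := by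
              rw [sub_add_cancel]
          _ ≤ _ := (enorm_add_le _ _).trans (by gcongr)
    _ ≤ 2 ^ (p - 1) * ((ENNReal.ofReal R * I) ^ p + ‖ω (x₀ + θ • (x - x₀))‖ₑ ^ p) :=
        ENNReal.rpow_add_le_mul_rpow_add_rpow _ _ hp
    _ ≤ _ := by
        rw [ENNReal.mul_rpow_of_nonneg _ _ hp₀]
        gcongr

variable [FiniteDimensional ℝ E] {μ : Measure E} [μ.IsAddHaarMeasure] [CompleteSpace G]

theorem exists_forall_lintegral_enorm_rpow_le_fderiv_add (hp : 1 ≤ p) (hΩ : IsOpen Ω)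
    (hball : Metric.closedBall x₀ R ⊆ Ω) (hθ₀ : 0 < θ) (hθ₁ : θ ≤ 1) :
    ∃ C : ENNReal, C ≠ ⊤ ∧ ∀ ω : E → G, ContDiffOn ℝ 1 ω Ω →
      ∫⁻ x in Metric.closedBall x₀ R, ‖ω x‖ₑ ^ p ∂μ ≤
        C * ((∫⁻ x in Metric.closedBall x₀ R, ‖fderiv ℝ ω x‖ₑ ^ p ∂μ) +
          ∫⁻ x in Metric.closedBall x₀ (θ * R), ‖ω x‖ₑ ^ p ∂μ) := by
  have hp₁ : 0 ≤ p - 1 := by linarith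
  let L := ENNReal.ofReal (θ ^ Module.finrank ℝ E)⁻¹
  refine ⟨2 ^ (p - 1) * (L * (ENNReal.ofReal R ^ p + 1)), by finiteness, fun ω hω ↦ ?_⟩
  let K := Metric.closedBall x₀ R
  let X := ∫⁻ x in K, ‖fderiv ℝ ω x‖ₑ ^ p ∂μ
  let Z := ∫⁻ x in Metric.closedBall x₀ (θ * R), ‖ω x‖ₑ ^ p ∂μ
  have hmeas : Measurable fun x ↦ ‖fderiv ℝ ω x‖ₑ ^ p :=
    (measurable_fderiv ℝ ω).enorm.pow_const p
  have hrays : Measurable fun x ↦ ∫⁻ t in Set.Icc θ 1, ‖fderiv ℝ ω (x₀ + t • (x - x₀))‖ₑ ^ p :=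
    Measurable.lintegral_prod_right' (f := fun q : E × ℝ ↦ _)
      (hmeas.comp (g := fun x ↦ _) (f := fun q : E × ℝ ↦ x₀ + q.2 • (q.1 - x₀)) (by fun_prop))
  calc ∫⁻ x in K, ‖ω x‖ₑ ^ p ∂μ
      ≤ ∫⁻ x in K, 2 ^ (p - 1) *
          (ENNReal.ofReal R ^ p * (∫⁻ t in Set.Icc θ 1, ‖fderiv ℝ ω (x₀ + t • (x - x₀))‖ₑ ^ p) +
            ‖ω (x₀ + θ • (x - x₀))‖ₑ ^ p) ∂μ :=
        setLIntegral_mono' measurableSet_closedBall fun x hx ↦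
          enorm_rpow_le_radial hp hΩ hω hball ⟨hθ₀.le, hθ₁⟩ hx
    _ = 2 ^ (p - 1) * (ENNReal.ofReal R ^ p *
          (∫⁻ x in K, (∫⁻ t in Set.Icc θ 1, ‖fderiv ℝ ω (x₀ + t • (x - x₀))‖ₑ ^ p) ∂μ) +
            ∫⁻ x in K, ‖ω (x₀ + θ • (x - x₀))‖ₑ ^ p ∂μ) := by
        rw [lintegral_const_mul' _ _ (by finiteness), lintegral_add_left (hrays.const_mul _),
          lintegral_const_mul _ hrays]
    _ ≤ 2 ^ (p - 1) * (ENNReal.ofReal R ^ p * (L * X) + L * Z) := by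
        gcongr
        · exact lintegral_lintegral_comp_add_smul_sub_le measurableSet_closedBall hθ₀
            (fun x hx t ht ↦ add_smul_sub_mem_closedBall_self hx ⟨hθ₀.le.trans ht.1, ht.2⟩) hmeas
        · exact setLIntegral_comp_add_smul_sub_le measurableSet_closedBall
            measurableSet_closedBall hθ₀ le_rfl
            (fun x hx ↦ add_smul_sub_mem_closedBall hx hθ₀.le) fun y ↦ ‖ω y‖ₑ ^ p
    _ ≤ 2 ^ (p - 1) * ((ENNReal.ofReal R ^ p + 1) * (L * X) +
          (ENNReal.ofReal R ^ p + 1) * (L * Z)) := by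
        refine mul_le_mul_right (add_le_add ?_ ?_) _
        · exact mul_le_mul_left le_self_add _
        · exact le_mul_of_one_le_left zero_le le_add_self
    _ = 2 ^ (p - 1) * (L * (ENNReal.ofReal R ^ p + 1)) * (X + Z) := by ring

end RadialPoincare

section LocalControl

variable {d : ℕ} {Ω B : Set (Euc d)} {V v : Euc d → ℝ} {p R θ : ℝ} {x x₀ : Euc d}

theorem exists_forall_lintegral_enorm_mul_rpow_le {α : Type*} [TopologicalSpace α]
    [MeasurableSpace α] [OpensMeasurableSpace α] [T2Space α] {μ : Measure α} {K : Set α}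
    (hK : IsCompact K) {f : α → ℝ} (hf : ContinuousOn f K) (hp : 0 ≤ p) :
    ∃ C : ENNReal, C ≠ ⊤ ∧ ∀ g : α → ℝ,
      ∫⁻ x in K, ‖f x * g x‖ₑ ^ p ∂μ ≤ C * ∫⁻ x in K, ‖g x‖ₑ ^ p ∂μ := by
  obtain ⟨M, hM⟩ := hK.exists_bound_of_continuousOn hf
  refine ⟨ENNReal.ofReal M ^ p, by finiteness, fun g ↦ ?_⟩
  rw [← lintegral_const_mul' _ _ (by finiteness)]
  refine setLIntegral_mono' hK.measurableSet fun x hx ↦ ?_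
  rw [enorm_mul, ENNReal.mul_rpow_of_nonneg _ _ hp, ← ofReal_norm (f x)]
  gcongr
  exact hM x hx

theorem exists_forall_lintegral_enorm_div_rpow_le (hΩ : IsOpen Ω) (hp : 1 < p)
    (hV : LocBddPotential Ω V) (hQ : ∀ u, IsTestFun Ω u → 0 ≤ energyQ Ω V p u)
    (hgs : IsGroundState Ω V p v) (hball : Metric.closedBall x₀ R ⊆ Ω) (hθ₀ : 0 < θ)
    (hθ₁ : θ ≤ 1) :
    ∃ C : ENNReal, C ≠ ⊤ ∧ ∀ u, IsTestFun Ω u →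
      ∫⁻ x in Metric.closedBall x₀ R, ‖u x / v x‖ₑ ^ p ≤
        C * (ENNReal.ofReal (energyQ Ω V p u) +
          ∫⁻ x in Metric.closedBall x₀ (θ * R), ‖u x / v x‖ₑ ^ p) := by
  have hK := isCompact_closedBall x₀ R
  obtain ⟨A, hA, hPoincare⟩ := exists_forall_lintegral_enorm_rpow_le_fderiv_add
    (G := ℝ) (μ := volume) hp.le hΩ hball hθ₀ hθ₁
  obtain ⟨C, hC, hgrad⟩ := exists_forall_lintegral_enorm_fderiv_div_rpow_le hΩ hp hV hQ hgs hK hball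
    (ε := (2 * A)⁻¹) (ENNReal.inv_ne_zero.2 (by finiteness))
  refine ⟨2 * (A * (C + 1)), by finiteness, fun u hu ↦ ?_⟩
  have hω := hu.contDiffOn_div hgs.1 fun x hx ↦ (hgs.2.1 x hx).ne'
  let q := ENNReal.ofReal (energyQ Ω V p u)
  let X := ∫⁻ x in Metric.closedBall x₀ R, ‖u x / v x‖ₑ ^ p
  let Z := ∫⁻ x in Metric.closedBall x₀ (θ * R), ‖u x / v x‖ₑ ^ p
  have hX : X ≠ ⊤ :=
    lintegral_enorm_rpow_ne_top_of_isCompact hK (hω.continuousOn.mono hball) (by linarith)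
  have hAε : A * (2 * A)⁻¹ ≤ 2⁻¹ := by
    rw [ENNReal.mul_inv (by simp) (by simp), mul_left_comm]
    exact mul_le_of_le_one_right zero_le (ENNReal.mul_inv_le_one A)
  have habsorb : X ≤ A * (C * q + Z) + 2⁻¹ * X := by
    calc X ≤ A * ((C * q + (2 * A)⁻¹ * X) + Z) := by
          refine (hPoincare _ hω).trans ?_
          gcongr
          exact hgrad u hu
      _ = A * (C * q + Z) + A * (2 * A)⁻¹ * X := by ring
      _ ≤ A * (C * q + Z) + 2⁻¹ * X := by gcongr
  calc X ≤ 2 * (A * (C * q + Z)) := le_two_mul_of_le_add_inv_two_mul hX habsorb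
    _ ≤ 2 * (A * ((C + 1) * q + (C + 1) * Z)) := by
        refine mul_le_mul_right (mul_le_mul_right (add_le_add ?_ ?_) _) _
        · exact mul_le_mul_left le_self_add _
        · exact le_mul_of_one_le_left zero_le le_add_self
    _ = 2 * (A * (C + 1)) * (q + Z) := by ring

theorem exists_forall_lintegral_enorm_rpow_le_concentric (hΩ : IsOpen Ω) (hp : 1 < p)
    (hV : LocBddPotential Ω V) (hQ : ∀ u, IsTestFun Ω u → 0 ≤ energyQ Ω V p u)
    (hgs : IsGroundState Ω V p v) (hR : 0 ≤ R) (hball : Metric.closedBall x₀ R ⊆ Ω) (hθ₀ : 0 < θ)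
    (hθ₁ : θ ≤ 1) :
    ∃ C : ENNReal, C ≠ ⊤ ∧ ∀ u, IsTestFun Ω u →
      ∫⁻ x in Metric.closedBall x₀ R, ‖u x‖ₑ ^ p ≤
        C * (ENNReal.ofReal (energyQ Ω V p u) +
          ∫⁻ x in Metric.closedBall x₀ (θ * R), ‖u x‖ₑ ^ p) := by
  have hp₀ : 0 ≤ p := by linarith
  have hsmall : Metric.closedBall x₀ (θ * R) ⊆ Ω :=
    (Metric.closedBall_subset_closedBall (mul_le_of_le_one_left hR hθ₁)).trans hball
  have hv := hgs.1.continuousOn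
  have hv₀ : ∀ x ∈ Ω, v x ≠ 0 := fun x hx ↦ (hgs.2.1 x hx).ne'
  obtain ⟨M, hM, hmul⟩ := exists_forall_lintegral_enorm_mul_rpow_le (μ := volume)
    (isCompact_closedBall x₀ R) (hv.mono hball) hp₀
  obtain ⟨m, hm, hinv⟩ := exists_forall_lintegral_enorm_mul_rpow_le (μ := volume)
    (isCompact_closedBall x₀ (θ * R)) ((hv.inv₀ hv₀).mono hsmall) hp₀
  obtain ⟨C, hC, hest⟩ :=
    exists_forall_lintegral_enorm_div_rpow_le hΩ hp hV hQ hgs hball hθ₀ hθ₁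
  refine ⟨M * C * (1 + m), by finiteness, fun u hu ↦ ?_⟩
  let q := ENNReal.ofReal (energyQ Ω V p u)
  let Z := ∫⁻ x in Metric.closedBall x₀ (θ * R), ‖u x‖ₑ ^ p
  calc ∫⁻ x in Metric.closedBall x₀ R, ‖u x‖ₑ ^ p
      = ∫⁻ x in Metric.closedBall x₀ R, ‖v x * (u x / v x)‖ₑ ^ p :=
        setLIntegral_congr_fun measurableSet_closedBall fun x hx ↦ by
          rw [mul_div_cancel₀ _ (hv₀ x (hball hx))]
    _ ≤ M * ∫⁻ x in Metric.closedBall x₀ R, ‖u x / v x‖ₑ ^ p := hmul _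
    _ ≤ M * (C * (q + ∫⁻ x in Metric.closedBall x₀ (θ * R), ‖(v x)⁻¹ * u x‖ₑ ^ p)) := by
        simp only [← div_eq_inv_mul]
        gcongr
        exact hest u hu
    _ ≤ M * (C * (q + m * Z)) := by
        gcongr
        exact hinv u
    _ ≤ M * (C * ((1 + m) * q + (1 + m) * Z)) := by
        refine mul_le_mul_right (mul_le_mul_right (add_le_add ?_ ?_) _) _
        · exact le_mul_of_one_le_left zero_le le_self_add
        · exact mul_le_mul_left le_add_self _
    _ = M * C * (1 + m) * (q + Z) := by ring

/-- Near the point `x`, the `L^p` mass of every test function is controlled by its energy together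
with its `L^p` mass on `B`. The constant may depend on `x` but not on the test function; masses are
extended nonnegative reals. -/
def IsLocallyControlled (Ω B : Set (Euc d)) (V : Euc d → ℝ) (p : ℝ) (x : Euc d) : Prop :=
  ∃ r > 0, ∃ C : ENNReal, C ≠ ⊤ ∧ ∀ u, IsTestFun Ω u →
    ∫⁻ y in Metric.ball x r, ‖u y‖ₑ ^ p ≤
      C * (ENNReal.ofReal (energyQ Ω V p u) + ∫⁻ y in B, ‖u y‖ₑ ^ p)

theorem isOpen_setOf_isLocallyControlled : IsOpen {x | IsLocallyControlled Ω B V p x} := by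
  rw [Metric.isOpen_iff]
  rintro x ⟨r, hr, C, hC, hest⟩
  refine ⟨r / 2, by positivity, fun y hy ↦ ⟨r / 2, by positivity, C, hC, fun u hu ↦ ?_⟩⟩
  refine (lintegral_mono_set (Metric.ball_subset_ball' ?_)).trans (hest u hu)
  linarith [Metric.mem_ball.1 hy]

theorem isLocallyControlled_of_mem (hB : IsOpen B) (hx : x ∈ B) :
    IsLocallyControlled Ω B V p x := by
  obtain ⟨r, hr, hball⟩ := Metric.isOpen_iff.1 hB x hx
  refine ⟨r, hr, 1, by simp, fun u _ ↦ ?_⟩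
  rw [one_mul]
  exact (lintegral_mono_set hball).trans le_add_self

theorem isLocallyControlled_of_mem_closure (hΩ : IsOpen Ω) (hp : 1 < p)
    (hV : LocBddPotential Ω V) (hQ : ∀ u, IsTestFun Ω u → 0 ≤ energyQ Ω V p u)
    (hgs : IsGroundState Ω V p v) (hx : x ∈ closure {y | IsLocallyControlled Ω B V p y})
    (hxΩ : x ∈ Ω) : IsLocallyControlled Ω B V p x := by
  obtain ⟨s, hs, hsΩ⟩ := Metric.isOpen_iff.1 hΩ x hxΩ
  obtain ⟨y, ⟨r, hr, C, hC, hest⟩, hxy⟩ := Metric.mem_closure_iff.1 hx (s / 4) (by positivity)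
  have hball : Metric.closedBall y (s / 2) ⊆ Ω :=
    (Metric.closedBall_subset_ball' (by rw [dist_comm]; linarith)).trans hsΩ
  obtain ⟨C', hC', hest'⟩ := exists_forall_lintegral_enorm_rpow_le_concentric hΩ hp hV hQ hgs
    (by positivity) hball (θ := min 1 (r / s)) (by positivity) (min_le_left _ _)
  have hθr : min 1 (r / s) * (s / 2) < r := by
    calc min 1 (r / s) * (s / 2) ≤ r / s * (s / 2) := by gcongr; exact min_le_right _ _
      _ = r / 2 := by field_simp
      _ < r := half_lt_self hr
  refine ⟨s / 4, by positivity, C' * (1 + C), by finiteness, fun u hu ↦ ?_⟩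
  let q := ENNReal.ofReal (energyQ Ω V p u)
  let b := ∫⁻ z in B, ‖u z‖ₑ ^ p
  calc ∫⁻ z in Metric.ball x (s / 4), ‖u z‖ₑ ^ p
      ≤ ∫⁻ z in Metric.closedBall y (s / 2), ‖u z‖ₑ ^ p := lintegral_mono_set <|
        (Metric.ball_subset_ball' (by linarith)).trans Metric.ball_subset_closedBall
    _ ≤ C' * (q + ∫⁻ z in Metric.closedBall y (min 1 (r / s) * (s / 2)), ‖u z‖ₑ ^ p) := hest' u hu
    _ ≤ C' * ((q + b) + C * (q + b)) := by
        refine mul_le_mul_right (add_le_add le_self_add ?_) _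
        exact (lintegral_mono_set (Metric.closedBall_subset_ball hθr)).trans (hest u hu)
    _ = C' * (1 + C) * (q + b) := by ring

theorem isLocallyControlled_of_isGroundState (hΩ : IsOpen Ω) (hΩc : IsPreconnected Ω) (hp : 1 < p)
    (hV : LocBddPotential Ω V) (hQ : ∀ u, IsTestFun Ω u → 0 ≤ energyQ Ω V p u)
    (hgs : IsGroundState Ω V p v) (hB : IsOpen B) (hBΩ : (Ω ∩ B).Nonempty) (hx : x ∈ Ω) :
    IsLocallyControlled Ω B V p x :=
  hΩc.subset_of_closure_inter_subset isOpen_setOf_isLocallyControlled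
    (hBΩ.mono fun _ hy ↦ ⟨hy.1, isLocallyControlled_of_mem hB hy.2⟩)
    (fun _ hy ↦ isLocallyControlled_of_mem_closure hΩ hp hV hQ hgs hy.1 hy.2) hx

end LocalControl

section Weight

section BallBump

variable {X : Type*} [PseudoMetricSpace X] {c x : X} {r : ℝ}

/-- A continuous function with values in `[0, 1]` which is positive exactly on `ball c r`; the
building block of the weight. -/
def ballBump (c : X) (r : ℝ) (x : X) : ℝ :=
  max 0 (min 1 (r - dist x c))

theorem continuous_ballBump (c : X) (r : ℝ) : Continuous (ballBump c r) := by
  unfold ballBump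
  fun_prop

theorem ballBump_nonneg : 0 ≤ ballBump c r x :=
  le_max_left _ _

theorem ballBump_le_one : ballBump c r x ≤ 1 :=
  max_le zero_le_one (min_le_left _ _)

theorem ballBump_pos (hx : x ∈ Metric.ball c r) : 0 < ballBump c r x :=
  lt_max_of_lt_right (lt_min one_pos (sub_pos.2 hx))

theorem ballBump_eq_zero (hx : x ∉ Metric.ball c r) : ballBump c r x = 0 :=
  max_eq_left ((min_le_right _ _).trans (sub_nonpos.2 (not_lt.1 hx)))

theorem lintegral_ballBump_mul_le [MeasurableSpace X] [OpensMeasurableSpace X] {μ : Measure X}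
    (g : X → ENNReal) :
    ∫⁻ x, ENNReal.ofReal (ballBump c r x) * g x ∂μ ≤ ∫⁻ x in Metric.ball c r, g x ∂μ := by
  rw [← lintegral_indicator Metric.isOpen_ball.measurableSet]
  refine lintegral_mono fun x ↦ ?_
  by_cases hx : x ∈ Metric.ball c r
  · rw [Set.indicator_of_mem hx]
    exact mul_le_of_le_one_left zero_le (ENNReal.ofReal_le_one.2 ballBump_le_one)
  · rw [ballBump_eq_zero hx, ENNReal.ofReal_zero, zero_mul]
    exact zero_le

section Sum

variable {ι : Type*} {c : ι → X} {r δ : ι → ℝ}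

theorem norm_mul_ballBump_le (hδ : ∀ i, 0 ≤ δ i) (i : ι) (x : X) :
    ‖δ i * ballBump (c i) (r i) x‖ ≤ δ i := by
  rw [Real.norm_of_nonneg (mul_nonneg (hδ i) ballBump_nonneg)]
  exact mul_le_of_le_one_right (hδ i) ballBump_le_one

theorem summable_mul_ballBump (hδ : ∀ i, 0 ≤ δ i) (hsum : Summable δ) (x : X) :
    Summable fun i ↦ δ i * ballBump (c i) (r i) x :=
  hsum.of_norm_bounded fun i ↦ norm_mul_ballBump_le hδ i x

theorem continuous_tsum_mul_ballBump (hδ : ∀ i, 0 ≤ δ i) (hsum : Summable δ) :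
    Continuous fun x ↦ ∑' i, δ i * ballBump (c i) (r i) x :=
  continuous_tsum (fun i ↦ (continuous_ballBump (c i) (r i)).const_mul (δ i)) hsum
    (norm_mul_ballBump_le hδ)

theorem lintegral_tsum_mul_ballBump_mul_le [Countable ι] [MeasurableSpace X]
    [OpensMeasurableSpace X] {μ : Measure X} (hδ : ∀ i, 0 ≤ δ i) (hsum : Summable δ)
    {g : X → ENNReal} (hg : Measurable g) :
    ∫⁻ x, ENNReal.ofReal (∑' i, δ i * ballBump (c i) (r i) x) * g x ∂μ ≤
      ∑' i, ENNReal.ofReal (δ i) * ∫⁻ x in Metric.ball (c i) (r i), g x ∂μ := by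
  have hterm : ∀ i, Measurable fun x ↦ ENNReal.ofReal (ballBump (c i) (r i) x) * g x := fun i ↦
    (continuous_ballBump (c i) (r i)).measurable.ennreal_ofReal.mul hg
  calc ∫⁻ x, ENNReal.ofReal (∑' i, δ i * ballBump (c i) (r i) x) * g x ∂μ
      = ∫⁻ x, ∑' i, ENNReal.ofReal (δ i) *
          (ENNReal.ofReal (ballBump (c i) (r i) x) * g x) ∂μ := by
        refine lintegral_congr fun x ↦ ?_
        rw [ENNReal.ofReal_tsum_of_nonneg (fun i ↦ mul_nonneg (hδ i) ballBump_nonneg)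
          (summable_mul_ballBump hδ hsum x), ← ENNReal.tsum_mul_right]
        simp only [ENNReal.ofReal_mul (hδ _), mul_assoc]
    _ = ∑' i, ENNReal.ofReal (δ i) *
          ∫⁻ x, ENNReal.ofReal (ballBump (c i) (r i) x) * g x ∂μ := by
        rw [lintegral_tsum fun i ↦ ((hterm i).const_mul _).aemeasurable]
        simp only [lintegral_const_mul _ (hterm _)]
    _ ≤ _ := ENNReal.tsum_le_tsum fun _ ↦ mul_le_mul_right (lintegral_ballBump_mul_le g) _

end Sum

end BallBump

variable {X : Type*} [PseudoMetricSpace X] [SecondCountableTopology X] [MeasurableSpace X]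
  [OpensMeasurableSpace X]

theorem exists_continuous_pos_forall_lintegral_mul_le (μ : Measure X) {s : Set X} {r : X → ℝ}
    {C : X → ENNReal} (hr : ∀ x ∈ s, 0 < r x) (hC : ∀ x ∈ s, C x ≠ ⊤) :
    ∃ W : X → ℝ, Continuous W ∧ (∀ x, 0 ≤ W x) ∧ (∀ x ∈ s, 0 < W x) ∧
      ∀ (g : X → ENNReal) (E : ENNReal), Measurable g →
        (∀ x ∈ s, ∫⁻ y in Metric.ball x (r x), g y ∂μ ≤ C x * E) →
          ∫⁻ y, ENNReal.ofReal (W y) * g y ∂μ ≤ E := by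
  obtain ⟨t, hts, htc, hcover⟩ := TopologicalSpace.countable_cover_nhdsWithin
    fun x hx ↦ mem_nhdsWithin_of_mem_nhds (Metric.ball_mem_nhds x (hr x hx))
  have := htc.to_subtype
  obtain ⟨δ, hδ, hδC⟩ := ENNReal.exists_pos_tsum_mul_lt_of_countable one_ne_zero
    (fun c : t ↦ 1 + C c) fun c ↦ by simpa using hC c (hts c.2)
  have hδ₀ : ∀ c, 0 ≤ (δ c : ℝ) := fun c ↦ (δ c).2
  have hsum : Summable fun c ↦ (δ c : ℝ) := by
    rw [NNReal.summable_coe, ← ENNReal.tsum_coe_ne_top_iff_summable]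
    refine ne_top_of_le_ne_top hδC.ne_top (ENNReal.tsum_le_tsum fun c ↦ ?_)
    exact le_mul_of_one_le_left zero_le le_self_add
  refine ⟨fun x ↦ ∑' c : t, δ c * ballBump (c : X) (r c) x, continuous_tsum_mul_ballBump hδ₀ hsum,
    fun x ↦ tsum_nonneg fun c ↦ mul_nonneg (hδ₀ c) ballBump_nonneg, fun x hx ↦ ?_,
    fun g E hg hgE ↦ ?_⟩
  · obtain ⟨c, hc, hxc⟩ := Set.mem_iUnion₂.1 (hcover hx)
    exact (summable_mul_ballBump hδ₀ hsum x).tsum_pos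
      (fun c ↦ mul_nonneg (hδ₀ c) ballBump_nonneg) ⟨c, hc⟩ (mul_pos (hδ _) (ballBump_pos hxc))
  · calc ∫⁻ y, ENNReal.ofReal (∑' c : t, δ c * ballBump (c : X) (r c) y) * g y ∂μ
        ≤ ∑' c : t, ENNReal.ofReal (δ c) * ∫⁻ y in Metric.ball (c : X) (r c), g y ∂μ :=
          lintegral_tsum_mul_ballBump_mul_le hδ₀ hsum hg
      _ ≤ ∑' c : t, (1 + C c) * δ c * E := by
          refine ENNReal.tsum_le_tsum fun c ↦ ?_
          rw [ENNReal.ofReal_coe_nnreal, mul_comm (1 + C c), mul_assoc]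
          gcongr
          exact (hgE c (hts c.2)).trans (mul_le_mul_left le_add_self _)
      _ ≤ E := by
          rw [ENNReal.tsum_mul_right]
          exact mul_le_of_le_one_left zero_le hδC.le

end Weight

section WeightBound

variable {d : ℕ} {Ω B : Set (Euc d)} {V u v W : Euc d → ℝ} {p : ℝ}

theorem IsTestFun.integrable_abs_rpow (hp : 0 < p) (hu : IsTestFun Ω u) {μ : Measure (Euc d)}
    [IsFiniteMeasureOnCompacts μ] : Integrable (fun x ↦ |u x| ^ p) μ :=
  integrable_rpow_of_hasCompactSupport hp hu.1.continuous.abs hu.2.1.norm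

theorem IsTestFun.ofReal_integral_abs_rpow (hp : 0 < p) (hu : IsTestFun Ω u)
    {μ : Measure (Euc d)} [IsFiniteMeasureOnCompacts μ] :
    ENNReal.ofReal (∫ x, |u x| ^ p ∂μ) = ∫⁻ x, ‖u x‖ₑ ^ p ∂μ := by
  rw [ofReal_integral_eq_lintegral_ofReal (hu.integrable_abs_rpow hp)
    (Eventually.of_forall fun x ↦ by positivity)]
  simp only [← ENNReal.ofReal_rpow_of_nonneg (abs_nonneg _) hp.le, Real.enorm_eq_ofReal_abs]

theorem IsTestFun.integral_mul_abs_rpow_le (hp : 0 < p) (hu : IsTestFun Ω u) (hW : Continuous W)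
    (hW₀ : ∀ x, 0 ≤ W x) {a : ℝ} (ha : 0 ≤ a)
    (h : ∫⁻ x, ENNReal.ofReal (W x) * ‖u x‖ₑ ^ p ≤ ENNReal.ofReal a) :
    ∫ x in Ω, W x * |u x| ^ p ≤ a := by
  have hcont : Continuous fun x ↦ |u x| ^ p :=
    hu.1.continuous.abs.rpow_const fun _ ↦ Or.inr hp.le
  rw [integral_eq_lintegral_of_nonneg_ae
    (Eventually.of_forall fun x ↦ mul_nonneg (hW₀ x) (by positivity))
    (hW.mul hcont).aestronglyMeasurable]
  refine ENNReal.toReal_le_of_le_ofReal ha ((setLIntegral_le_lintegral _ _).trans ?_)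
  simpa only [ENNReal.ofReal_mul (hW₀ _), ← ENNReal.ofReal_rpow_of_nonneg (abs_nonneg _) hp.le,
    ← Real.enorm_eq_ofReal_abs] using h

theorem exists_weight_of_isLocallyControlled (hp : 0 < p)
    (hQ : ∀ u, IsTestFun Ω u → 0 ≤ energyQ Ω V p u)
    (hloc : ∀ x ∈ Ω, IsLocallyControlled Ω B V p x) :
    ∃ W : Euc d → ℝ, ContinuousOn W Ω ∧ (∀ x ∈ Ω, 0 < W x) ∧
      ∀ u : Euc d → ℝ, IsTestFun Ω u →
        (∫ x in Ω, W x * |u x| ^ p) ≤ energyQ Ω V p u + ∫ x in B, |u x| ^ p := by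
  choose! r hr C hC hest using hloc
  obtain ⟨W, hW, hW₀, hWpos, hWle⟩ :=
    exists_continuous_pos_forall_lintegral_mul_le (volume : Measure (Euc d)) hr hC
  refine ⟨W, hW.continuousOn, hWpos, fun u hu ↦ ?_⟩
  have hB : 0 ≤ ∫ x in B, |u x| ^ p := integral_nonneg fun x ↦ by positivity
  refine hu.integral_mul_abs_rpow_le hp hW hW₀ (add_nonneg (hQ u hu) hB) ?_
  rw [ENNReal.ofReal_add (hQ u hu) hB, hu.ofReal_integral_abs_rpow hp]
  exact hWle _ _ (hu.1.continuous.enorm.measurable.pow_const p) fun x hx ↦ hest x hx u hu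

end WeightBound

theorem weight_bound_of_groundState_general {d : ℕ} {Ω : Set (Euc d)} (hΩ : IsOpen Ω)
    (hΩc : IsPreconnected Ω) {p : ℝ} (hp : 1 < p) {V : Euc d → ℝ} (hV : LocBddPotential Ω V)
    (hQ : ∀ u : Euc d → ℝ, IsTestFun Ω u → 0 ≤ energyQ Ω V p u) {v : Euc d → ℝ}
    (hv : IsGroundState Ω V p v) {B : Set (Euc d)} (hB : IsOpen B) (hBΩ : (Ω ∩ B).Nonempty) :
    ∃ W : Euc d → ℝ, ContinuousOn W Ω ∧ (∀ x ∈ Ω, 0 < W x) ∧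
      ∀ u : Euc d → ℝ, IsTestFun Ω u →
        (∫ x in Ω, W x * |u x| ^ p) ≤ energyQ Ω V p u + ∫ x in B, |u x| ^ p :=
  exists_weight_of_isLocallyControlled (by linarith) hQ fun _ ↦
    isLocallyControlled_of_isGroundState hΩ hΩc hp hV hQ hv hB hBΩ

/-- If `Q ≥ 0` admits a ground state, then for every nonempty open `B ⋐ Ω` there is a
positive continuous weight `W` on `Ω` with `∫_Ω W|u|^p ≤ Q(u) + ∫_B |u|^p` for all
test functions `u`. -/
theorem weight_bound_of_groundState {d : ℕ} (hd : 2 ≤ d)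
    (Ω : Set (Euc d)) (hΩo : IsOpen Ω) (hΩc : IsConnected Ω)
    {p : ℝ} (hp₁ : 1 < p) (V : Euc d → ℝ) (hV : LocBddPotential Ω V)
    (hQ : ∀ u : Euc d → ℝ, IsTestFun Ω u → 0 ≤ energyQ Ω V p u)
    (v : Euc d → ℝ) (hv : IsGroundState Ω V p v)
    (B : Set (Euc d)) (hBo : IsOpen B) (hBne : B.Nonempty)
    (hBc : IsCompact (closure B)) (hBΩ : closure B ⊆ Ω) :
    ∃ W : Euc d → ℝ, ContinuousOn W Ω ∧ (∀ x ∈ Ω, 0 < W x) ∧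
      ∀ u : Euc d → ℝ, IsTestFun Ω u →
        (∫ x in Ω, W x * |u x| ^ p) ≤ energyQ Ω V p u + ∫ x in B, |u x| ^ p :=
  weight_bound_of_groundState_general hΩo hΩc.isPreconnected hp₁ hV hQ hv hBo
    (hBne.mono fun _ hx ↦ ⟨hBΩ (subset_closure hx), hx⟩)
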